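/- arXiv:2503.23380 — 7 statements merged into one kernel-verified Lean document; each statement's English description precedes it below -/
import Mathlib

section
/- Let f : [0,1]^2 → ℝ be continuous and monotone (i.e. for every t ∈ ℝ the level set f⁻¹(t) is connected). Then f has the relaxed Sard property if and only if f has the weak Sard property. -/
open MeasureTheory Set

noncomputable section

/-- The unit square `[0,1]²` in the Euclidean plane. -/
def unitSquare : Set (EuclideanSpace ℝ (Fin 2)) := {x | ∀ i, x i ∈ Set.Icc (0:ℝ) 1}

/-- The critical set of `f : [0,1]² → ℝ`: points of the square where `f` is either not
differentiable or has vanishing gradient. -/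
def critSet (f : EuclideanSpace ℝ (Fin 2) → ℝ) : Set (EuclideanSpace ℝ (Fin 2)) :=
  {x | x ∈ unitSquare ∧
    (¬ DifferentiableWithinAt ℝ f unitSquare x ∨ fderivWithin ℝ f unitSquare x = 0)}

/-- The set `E* = ⋃ₜ Eₜ*`: the union over `t` of all connected components of the level set
`Eₜ = {f = t}` having strictly positive one-dimensional Hausdorff measure. A point `x` belongs
to `E*` iff the connected component of `x` in its own level set has positive `H¹` measure. -/
def Estar (f : EuclideanSpace ℝ (Fin 2) → ℝ) : Set (EuclideanSpace ℝ (Fin 2)) :=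
  {x | 0 < μH[1] (connectedComponentIn (unitSquare ∩ f ⁻¹' {f x}) x)}

/-- A preconnected set with two distinct points has positive `H¹` measure. -/
lemma hausdorff_pos_of_preconnected {s : Set (EuclideanSpace ℝ (Fin 2))} (hs : IsPreconnected s)
    {x y : EuclideanSpace ℝ (Fin 2)} (hx : x ∈ s) (hy : y ∈ s) (hxy : y ≠ x) : 0 < μH[1] s := by
  have hlip : LipschitzWith 1 (fun z : EuclideanSpace ℝ (Fin 2) => dist z x) :=
    LipschitzWith.dist_left x
  have h1 := hlip.hausdorffMeasure_image_le (zero_le_one : (0:ℝ) ≤ 1) s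
  have h2 := hs.intermediate_value hx hy hlip.continuous.continuousOn
  rw [hausdorffMeasure_real] at h1
  have h3 := measure_mono (μ := (volume : Measure ℝ)) h2
  simp only [dist_self, Real.volume_Icc, sub_zero] at h3
  have h4 : 0 < ENNReal.ofReal (dist y x) := by simpa using dist_pos.2 hxy
  simpa using h4.trans_le (h3.trans h1)

lemma convex_unitSquare : Convex ℝ unitSquare := by
  intro x hx y hy a b ha hb hab i
  have := (convex_Icc (0:ℝ) 1) (hx i) (hy i) ha hb hab
  simpa using this

lemma seg_aux {f : EuclideanSpace ℝ (Fin 2) → ℝ} (hf : ContinuousOn f unitSquare)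
    {x : EuclideanSpace ℝ (Fin 2)}
    (hx : ∀ y ∈ unitSquare, f y = f x → y = x) {y z : EuclideanSpace ℝ (Fin 2)}
    (hy : y ∈ unitSquare) (hz : z ∈ unitSquare) (h1 : f y < f x) (h2 : f x < f z) :
    ∃ a b : ℝ, 0 < a ∧ 0 < b ∧ ∀ i, a * (y i - x i) + b * (z i - x i) = 0 := by
  have hsub := convex_unitSquare.segment_subset hy hz
  obtain ⟨w, hw, hwx⟩ := (convex_segment (𝕜 := ℝ) y z).isPreconnected.intermediate_value
    (left_mem_segment ℝ y z) (right_mem_segment ℝ y z) (hf.mono hsub) ⟨h1.le, h2.le⟩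
  obtain rfl := hx w (hsub hw) hwx
  obtain ⟨a, b, ha, hb, hab, rfl⟩ := hw
  refine ⟨a, b, lt_of_le_of_ne ha ?_, lt_of_le_of_ne hb ?_, ?_⟩
  · rintro rfl
    obtain rfl : b = 1 := by linarith
    simp at h2
  · rintro rfl
    obtain rfl : a = 1 := by linarith
    simp at h1
  · intro i
    obtain rfl : a = 1 - b := by linarith
    simp only [PiLp.add_apply, PiLp.smul_apply, smul_eq_mul]
    ring

/-- A point whose level set is a singleton is a global extremum. -/
lemma extremum_of_singleton {f : EuclideanSpace ℝ (Fin 2) → ℝ} (hf : ContinuousOn f unitSquare)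
    {x : EuclideanSpace ℝ (Fin 2)}
    (hx : ∀ y ∈ unitSquare, f y = f x → y = x) :
    (∀ y ∈ unitSquare, f x ≤ f y) ∨ (∀ y ∈ unitSquare, f y ≤ f x) := by
  by_contra! h
  obtain ⟨⟨y, hy, hyx⟩, z, hz, hzx⟩ := h
  obtain ⟨a, b, ha, hb, hab⟩ := seg_aux hf hx hy hz hyx hzx
  have key : ∀ w ∈ unitSquare, (w 0 - x 0) * (z 1 - x 1) = (w 1 - x 1) * (z 0 - x 0) := by
    intro w hw
    rcases lt_trichotomy (f w) (f x) with h | h | h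
    · obtain ⟨c, d, hc, hd, hcd⟩ := seg_aux hf hx hw hz h hzx
      apply mul_left_cancel₀ hc.ne'
      linear_combination (z 1 - x 1) * hcd 0 - (z 0 - x 0) * hcd 1
    · rw [hx w hw h]
      ring
    · obtain ⟨c, d, hc, hd, hcd⟩ := seg_aux hf hx hy hw hyx h
      apply mul_left_cancel₀ (mul_pos ha hd).ne'
      linear_combination a * (z 1 - x 1) * hcd 0 - a * (z 0 - x 0) * hcd 1
        - c * (z 1 - x 1) * hab 0 + c * (z 0 - x 0) * hab 1
  have k0 := key !₂[0, 0] (by intro i; fin_cases i <;> simp)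
  have k1 := key !₂[1, 0] (by intro i; fin_cases i <;> simp)
  have k2 := key !₂[0, 1] (by intro i; fin_cases i <;> simp)
  simp at k0 k1 k2
  have e1 : z 1 = x 1 := by linarith
  have e0 : z 0 = x 0 := by linarith
  have : z = x := by
    ext i
    fin_cases i
    · exact e0
    · exact e1
  exact hzx.ne' (by rw [this])

lemma singleton_of_not_Estar {f : EuclideanSpace ℝ (Fin 2) → ℝ}
    (hmono : ∀ t : ℝ, IsPreconnected (unitSquare ∩ f ⁻¹' {t}))
    {x : EuclideanSpace ℝ (Fin 2)} (hxQ : x ∈ unitSquare) (hx : x ∉ Estar f) :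
    ∀ y ∈ unitSquare, f y = f x → y = x := by
  intro y hy hyx
  by_contra hne
  apply hx
  have hmem : x ∈ unitSquare ∩ f ⁻¹' {f x} := ⟨hxQ, rfl⟩
  change 0 < μH[1] (connectedComponentIn (unitSquare ∩ f ⁻¹' {f x}) x)
  rw [(hmono (f x)).connectedComponentIn hmem]
  exact hausdorff_pos_of_preconnected (hmono (f x)) hmem ⟨hy, hyx⟩ hne

lemma countable_diff_Estar {f : EuclideanSpace ℝ (Fin 2) → ℝ} (hf : ContinuousOn f unitSquare)
    (hmono : ∀ t : ℝ, IsPreconnected (unitSquare ∩ f ⁻¹' {t})) :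
    (unitSquare \ Estar f).Countable := by
  have h1 : (({x | ∀ y ∈ unitSquare, f x ≤ f y} ∩ (unitSquare \ Estar f))).Subsingleton := by
    rintro x ⟨hx, hxQ, hxE⟩ y ⟨hy, hyQ, hyE⟩
    exact singleton_of_not_Estar hmono hyQ hyE x hxQ (le_antisymm (hx y hyQ) (hy x hxQ))
  have h2 : (({x | ∀ y ∈ unitSquare, f y ≤ f x} ∩ (unitSquare \ Estar f))).Subsingleton := by
    rintro x ⟨hx, hxQ, hxE⟩ y ⟨hy, hyQ, hyE⟩
    exact singleton_of_not_Estar hmono hyQ hyE x hxQ (le_antisymm (hy x hxQ) (hx y hyQ))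
  refine (h1.countable.union h2.countable).mono ?_
  rintro x ⟨hxQ, hxE⟩
  rcases extremum_of_singleton hf (singleton_of_not_Estar hmono hxQ hxE) with h | h
  · exact Or.inl ⟨h, hxQ, hxE⟩
  · exact Or.inr ⟨h, hxQ, hxE⟩

/-- For a continuous monotone function `f : [0,1]² → ℝ` (all level sets connected),
the relaxed Sard property `f_#(𝟙_S L²) ⊥ L¹` holds iff the weak Sard property
`f_#(𝟙_{S ∩ E*} L²) ⊥ L¹` holds. -/
theorem relaxed_iff_weak_sard_of_monotone (f : EuclideanSpace ℝ (Fin 2) → ℝ)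
    (hf : ContinuousOn f unitSquare)
    (hmono : ∀ t : ℝ, IsPreconnected (unitSquare ∩ f ⁻¹' {t})) :
    (Measure.map f (volume.restrict (critSet f))).MutuallySingular volume ↔
      (Measure.map f (volume.restrict (critSet f ∩ Estar f))).MutuallySingular volume := by
  have hnull : volume (critSet f \ Estar f) = 0 :=
    ((countable_diff_Estar hf hmono).mono
      (sdiff_subset_sdiff_left fun x hx => hx.1)).measure_zero _
  have hae : (critSet f ∩ Estar f : Set _) =ᵐ[volume] critSet f := by
    refine inter_subset_left.eventuallyLE.antisymm ?_
    rw [ae_le_set, sdiff_self_inter]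
    exact hnull
  rw [Measure.restrict_congr_set hae]
end
end

section
/- There exists a function f : [0,1]^2 → ℝ which belongs to C^{1,α}([0,1]^2) for every α ∈ (0,1), which has the weak Sard property but does not have the relaxed Sard property. -/
open MeasureTheory Set

noncomputable section

/-- `f` is of class `C^{1,α}` on `[0,1]²`: continuously differentiable with gradient
Hölder continuous of exponent `α`. -/
def IsC1Holder (f : EuclideanSpace ℝ (Fin 2) → ℝ) (α : ℝ) : Prop :=
  DifferentiableOn ℝ f unitSquare ∧
  ContinuousOn (fderivWithin ℝ f unitSquare) unitSquare ∧
  ∃ C : ℝ, ∀ x ∈ unitSquare, ∀ y ∈ unitSquare,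
    ‖fderivWithin ℝ f unitSquare x - fderivWithin ℝ f unitSquare y‖ ≤ C * dist x y ^ α



namespace SardAux

def HH (v : ℝ) : ℝ := Real.smoothTransition (-v)
def ww (v : ℝ) : ℝ := Real.smoothTransition (1 - v ^ 2)

lemma HH_nonneg (v : ℝ) : 0 ≤ HH v := Real.smoothTransition.nonneg _
lemma HH_le_one (v : ℝ) : HH v ≤ 1 := Real.smoothTransition.le_one _
lemma ww_nonneg (v : ℝ) : 0 ≤ ww v := Real.smoothTransition.nonneg _
lemma ww_le_one (v : ℝ) : ww v ≤ 1 := Real.smoothTransition.le_one _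
lemma HH_of_nonneg {v : ℝ} (h : 0 ≤ v) : HH v = 0 :=
  Real.smoothTransition.zero_of_nonpos (by linarith)
lemma HH_of_le {v : ℝ} (h : v ≤ -1) : HH v = 1 :=
  Real.smoothTransition.one_of_one_le (by linarith)
lemma ww_zero : ww 0 = 1 := Real.smoothTransition.one_of_one_le (by norm_num)
lemma ww_of_le {v : ℝ} (h : 1 ≤ |v|) : ww v = 0 :=
  Real.smoothTransition.zero_of_nonpos (by nlinarith [sq_abs v])

lemma HH_contDiff : ContDiff ℝ 2 HH := by
  unfold HH
  exact Real.smoothTransition.contDiff.comp contDiff_neg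
lemma ww_contDiff : ContDiff ℝ 2 ww := by
  unfold ww
  exact Real.smoothTransition.contDiff.comp (by fun_prop)

lemma HH_deriv_zero {v : ℝ} (h : 1 ≤ |v|) : deriv HH v = 0 := by
  rcases le_abs.1 h with h | h
  · apply IsLocalMin.deriv_eq_zero
    refine Filter.Eventually.of_forall fun y => ?_
    simp only [HH_of_nonneg (by linarith : 0 ≤ v)]
    exact HH_nonneg y
  · apply IsLocalMax.deriv_eq_zero
    refine Filter.Eventually.of_forall fun y => ?_
    simp only [HH_of_le (by linarith : v ≤ -1)]
    exact HH_le_one y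

lemma ww_deriv_zero {v : ℝ} (h : 1 ≤ |v|) : deriv ww v = 0 := by
  apply IsLocalMin.deriv_eq_zero
  refine Filter.Eventually.of_forall fun y => ?_
  simp only [ww_of_le h]
  exact ww_nonneg y

lemma deriv_bounds {h : ℝ → ℝ} (hc : ContDiff ℝ 2 h) (hz : ∀ v, 1 ≤ |v| → deriv h v = 0) :
    ∃ B : ℝ, 0 ≤ B ∧ (∀ v, |deriv h v| ≤ B) ∧
      ∀ v w, |deriv h v - deriv h w| ≤ B * |v - w| := by
  have hd : ContDiff ℝ 1 (deriv h) := by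
    have : ContDiff ℝ (1 + 1) h := by simpa [one_add_one_eq_two] using hc
    exact (contDiff_succ_iff_deriv.1 this).2.2
  have hs : HasCompactSupport (deriv h) := by
    apply HasCompactSupport.intro (isCompact_Icc (a := (-1:ℝ)) (b := 1))
    intro x hx
    apply hz
    by_contra hlt
    push Not at hlt
    exact hx ⟨(abs_lt.1 hlt).1.le, (abs_lt.1 hlt).2.le⟩
  obtain ⟨C, hC⟩ := hd.lipschitzWith_of_hasCompactSupport hs one_ne_zero
  obtain ⟨D, hD⟩ := hd.continuous.bounded_above_of_compact_support hs
  refine ⟨max C D, le_max_of_le_left C.2, fun v => le_max_of_le_right (hD v), fun v w => ?_⟩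
  have := hC.dist_le_mul v w
  rw [Real.dist_eq, Real.dist_eq] at this
  exact this.trans (by gcongr; exact le_max_left _ _)

def FF (m : ℕ) (v : ℝ) : ℝ := HH v - m * ww v

lemma FF_hasDeriv (m : ℕ) (v : ℝ) : HasDerivAt (FF m) (deriv HH v - m * deriv ww v) v := by
  have h1 := (HH_contDiff.differentiable (by norm_num) v).hasDerivAt
  have h2 := (ww_contDiff.differentiable (by norm_num) v).hasDerivAt
  exact h1.sub (h2.const_mul _)

lemma FF_deriv (m : ℕ) (v : ℝ) : deriv (FF m) v = deriv HH v - m * deriv ww v :=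
  (FF_hasDeriv m v).deriv

lemma FF_deriv_zero (m : ℕ) {v : ℝ} (h : 1 ≤ |v|) : deriv (FF m) v = 0 := by
  rw [FF_deriv, HH_deriv_zero h, ww_deriv_zero h]; simp

lemma FF_bounds : ∃ B : ℝ, 0 ≤ B ∧ ∀ m : ℕ, (∀ v, |deriv (FF m) v| ≤ B * (m + 1)) ∧
      ∀ v w, |deriv (FF m) v - deriv (FF m) w| ≤ B * (m + 1) * |v - w| := by
  obtain ⟨B1, p1, b1, l1⟩ := deriv_bounds HH_contDiff (fun v => HH_deriv_zero)
  obtain ⟨B2, p2, b2, l2⟩ := deriv_bounds ww_contDiff (fun v => ww_deriv_zero)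
  refine ⟨B1 + B2, by positivity, fun m => ⟨fun v => ?_, fun v w => ?_⟩⟩
  · rw [FF_deriv]
    have h1 := b1 v
    have h2 := mul_le_mul_of_nonneg_left (b2 v) (Nat.cast_nonneg (α := ℝ) m)
    have h3 := abs_sub (deriv HH v) (m * deriv ww v)
    rw [abs_mul, Nat.abs_cast] at h3
    nlinarith [mul_nonneg p1 (Nat.cast_nonneg (α := ℝ) m)]
  · rw [FF_deriv, FF_deriv]
    have h1 := l1 v w
    have h2 := mul_le_mul_of_nonneg_left (l2 v w) (Nat.cast_nonneg (α := ℝ) m)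
    have h3 := abs_sub (deriv HH v - deriv HH w) (m * (deriv ww v - deriv ww w))
    rw [abs_mul, Nat.abs_cast] at h3
    have e : deriv HH v - m * deriv ww v - (deriv HH w - m * deriv ww w) =
      deriv HH v - deriv HH w - (m * (deriv ww v - deriv ww w)) := by ring
    rw [e]
    nlinarith [mul_nonneg (mul_nonneg p1 (Nat.cast_nonneg (α := ℝ) m)) (abs_nonneg (v - w)),
      mul_nonneg p2 (abs_nonneg (v - w))]

lemma FF_le_one (m : ℕ) (v : ℝ) : FF m v ≤ 1 := by
  have := mul_nonneg (Nat.cast_nonneg (α := ℝ) m) (ww_nonneg v)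
  have := HH_le_one v
  unfold FF; linarith
lemma FF_abs (m : ℕ) (v : ℝ) : |FF m v| ≤ m + 1 := by
  have h1 := mul_nonneg (Nat.cast_nonneg (α := ℝ) m) (ww_nonneg v)
  have h2 := mul_le_mul_of_nonneg_left (ww_le_one v) (Nat.cast_nonneg (α := ℝ) m)
  have := HH_le_one v
  have := HH_nonneg v
  unfold FF; rw [abs_le]; constructor <;> linarith
lemma FF_zero (m : ℕ) : FF m 0 = -m := by
  unfold FF; rw [ww_zero, HH_of_nonneg le_rfl]; ring
lemma FF_nonpos (m : ℕ) {v : ℝ} (h : 0 ≤ v) : FF m v ≤ 0 := by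
  have := mul_nonneg (Nat.cast_nonneg (α := ℝ) m) (ww_nonneg v)
  unfold FF; rw [HH_of_nonneg h]; linarith
lemma FF_of_ge (m : ℕ) {v : ℝ} (h : 1 ≤ v) : FF m v = 0 := by
  unfold FF; rw [HH_of_nonneg (by linarith), ww_of_le (h.trans (le_abs_self v))]; ring
lemma FF_of_le (m : ℕ) {v : ℝ} (h : v ≤ -1) : FF m v = 1 := by
  unfold FF; rw [HH_of_le h, ww_of_le (by rw [le_abs]; right; linarith)]; ring

/-- moat widths -/
def dl (m : ℕ) : ℝ := 1 / (16 * ((m:ℝ) + 1) ^ 2)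
lemma dl_pos (m : ℕ) : 0 < dl m := by unfold dl; positivity

def th (m : ℕ) (x : ℝ) : ℝ := Real.pi * (2 ^ m * x)
def aa (m : ℕ) (x : ℝ) : ℝ := (1/4) ^ m * FF m (Real.sin (th m x) / dl m)
def gg (m : ℕ) (x : ℝ) : ℝ :=
  (1/2) ^ m * (Real.pi / dl m) * (deriv (FF m) (Real.sin (th m x) / dl m) * Real.cos (th m x))

lemma aa_hasDeriv (m : ℕ) (x : ℝ) : HasDerivAt (aa m) (gg m x) x := by
  have h0 : HasDerivAt (th m) (Real.pi * (2 ^ m * 1)) x :=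
    ((hasDerivAt_id x).const_mul _).const_mul _
  have h1 := (h0.sin).div_const (dl m)
  have h2 : HasDerivAt (FF m) _ (Real.sin (th m x) / dl m) :=
    (FF_hasDeriv m _).differentiableAt.hasDerivAt
  have h3 := (h2.comp x h1).const_mul ((1/4:ℝ) ^ m)
  refine h3.congr_deriv ?_
  unfold gg
  have : (1/4:ℝ) ^ m * 2 ^ m = (1/2) ^ m := by rw [← mul_pow]; norm_num
  rw [← this]; ring

lemma gg_bounds : ∃ B : ℝ, 0 ≤ B ∧ ∀ m : ℕ,
    (∀ x, |gg m x| ≤ B * ((m:ℝ) + 1) ^ 5 * (1/2) ^ m) ∧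
    ∀ x y, |gg m x - gg m y| ≤ B * ((m:ℝ) + 1) ^ 5 * |x - y| := by
  obtain ⟨B, hB, h⟩ := FF_bounds
  refine ⟨B * (16 * Real.pi) ^ 2 * 2, by positivity, fun m => ?_⟩
  obtain ⟨hb, hl⟩ := h m
  have hpi := Real.pi_gt_three
  have hm : (1:ℝ) ≤ (m:ℝ) + 1 := by
    have := Nat.cast_nonneg (α := ℝ) m
    linarith
  have hdl : Real.pi / dl m = 16 * Real.pi * ((m:ℝ)+1)^2 := by
    unfold dl; field_simp
  constructor
  · intro x
    unfold gg
    rw [abs_mul, abs_mul, abs_mul, hdl, abs_of_nonneg (by positivity : (0:ℝ) ≤ (1/2)^m),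
      abs_of_nonneg (by positivity : 0 ≤ 16 * Real.pi * ((m:ℝ)+1)^2)]
    have h1 := hb (Real.sin (th m x) / dl m)
    have h2 := Real.abs_cos_le_one (th m x)
    calc _ ≤ (1/2:ℝ)^m * (16 * Real.pi * ((m:ℝ)+1)^2) * (B * (m+1) * 1) := by gcongr
      _ = B * (16 * Real.pi) * ((m:ℝ)+1)^3 * (1/2)^m := by ring
      _ ≤ B * ((16 * Real.pi)^2 * 2) * ((m:ℝ)+1)^5 * (1/2)^m := by
        have hc : 16 * Real.pi ≤ (16 * Real.pi)^2 * 2 := by nlinarith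
        have h35 : ((m:ℝ)+1)^3 ≤ ((m:ℝ)+1)^5 := pow_le_pow_right₀ hm (by norm_num)
        exact mul_le_mul_of_nonneg_right (mul_le_mul (mul_le_mul_of_nonneg_left hc hB) h35
          (by positivity) (by positivity)) (by positivity)
      _ = _ := by ring
  · intro x y
    have key : |deriv (FF m) (Real.sin (th m x) / dl m) * Real.cos (th m x) -
        deriv (FF m) (Real.sin (th m y) / dl m) * Real.cos (th m y)| ≤
        2 * B * (m+1) / dl m * |th m x - th m y| := by
      have e : deriv (FF m) (Real.sin (th m x) / dl m) * Real.cos (th m x) -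
        deriv (FF m) (Real.sin (th m y) / dl m) * Real.cos (th m y) =
        (deriv (FF m) (Real.sin (th m x) / dl m) - deriv (FF m) (Real.sin (th m y) / dl m))
          * Real.cos (th m x) + deriv (FF m) (Real.sin (th m y) / dl m) *
          (Real.cos (th m x) - Real.cos (th m y)) := by ring
      rw [e]
      refine (abs_add_le _ _).trans ?_
      rw [abs_mul, abs_mul]
      have h1 := hl (Real.sin (th m x) / dl m) (Real.sin (th m y) / dl m)
      have h2 := Real.abs_cos_le_one (th m x)
      have h3 := hb (Real.sin (th m y) / dl m)
      have h4 : |Real.cos (th m x) - Real.cos (th m y)| ≤ |th m x - th m y| := by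
        simpa [Real.dist_eq] using Real.lipschitzWith_cos.dist_le_mul (th m x) (th m y)
      have h5 : |Real.sin (th m x) - Real.sin (th m y)| ≤ |th m x - th m y| := by
        simpa [Real.dist_eq] using Real.lipschitzWith_sin.dist_le_mul (th m x) (th m y)
      rw [← sub_div, abs_div, abs_of_pos (dl_pos m)] at h1
      have h6 : (1:ℝ) ≤ 1 / dl m := by
        unfold dl; rw [one_div_one_div]; nlinarith
      have hd := dl_pos m
      calc _ ≤ (B * (m+1) * (|th m x - th m y| / dl m)) * 1 + B * (m+1) * |th m x - th m y| * 1 := by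
              rw [mul_one (B * (m+1) * |th m x - th m y|)]
              gcongr
              exact h1.trans (by gcongr)
        _ ≤ (B * (m+1) * (|th m x - th m y| / dl m)) * 1 +
              B * (m+1) * |th m x - th m y| * (1 / dl m) := by gcongr
        _ = _ := by ring
    unfold gg
    rw [← mul_sub, abs_mul, abs_of_nonneg (by rw [hdl]; positivity)]
    have e2 : |th m x - th m y| = Real.pi * 2 ^ m * |x - y| := by
      unfold th
      rw [← mul_sub, ← mul_sub, abs_mul, abs_mul, abs_of_pos Real.pi_pos,
        abs_of_pos (by positivity : (0:ℝ) < 2 ^ m)]; ring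
    have e3 : (1/2:ℝ)^m * 2^m = 1 := by rw [← mul_pow]; norm_num
    rw [e2] at key
    calc _ ≤ (1/2:ℝ)^m * (Real.pi / dl m) * (2 * B * (m+1) / dl m * (Real.pi * 2 ^ m * |x - y|)) := by
            apply mul_le_mul_of_nonneg_left key
            rw [hdl]; positivity
      _ = ((1/2:ℝ)^m * 2^m) * (Real.pi / dl m)^2 * (2 * B * (m+1)) * |x-y| := by ring
      _ = _ := by rw [e3, hdl]; ring

lemma aa_abs (m : ℕ) (x : ℝ) : |aa m x| ≤ ((m:ℝ) + 1) * (1/4) ^ m := by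
  unfold aa
  rw [abs_mul, abs_of_pos (by positivity), mul_comm]
  gcongr; exact FF_abs _ _

def AA (x : ℝ) : ℝ := ∑' m, aa m x
def GG (x : ℝ) : ℝ := ∑' m, gg m x

lemma summ_pow (k : ℕ) {r : ℝ} (h0 : 0 ≤ r) (h1 : r < 1) :
    Summable fun m : ℕ => ((m:ℝ) + 1) ^ k * r ^ m := by
  rcases h0.eq_or_lt with rfl | h0
  · refine summable_of_ne_finset_zero (s := {0}) ?_
    intro b hb
    simp at hb
    simp [hb]
  have hn : ‖r‖ < 1 := by rwa [Real.norm_of_nonneg h0.le]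
  have h1 : Summable (fun n : ℕ => (n:ℝ) ^ k * r ^ n) :=
    summable_pow_mul_geometric_of_norm_lt_one k hn
  have h2 : Summable (fun n : ℕ => ((n + 1 : ℕ):ℝ) ^ k * r ^ (n + 1)) :=
    (summable_nat_add_iff (f := fun n : ℕ => (n:ℝ) ^ k * r ^ n) 1).2 h1
  refine (h2.mul_left r⁻¹).congr fun m => ?_
  rw [pow_succ r m, Nat.cast_succ]
  field_simp

lemma aa_summable (x : ℝ) : Summable fun m => aa m x :=
  Summable.of_norm_bounded (by simpa using summ_pow 1 (r := 1/4) (by norm_num) (by norm_num))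
    (fun m => aa_abs m x)

lemma gg_summable (x : ℝ) : Summable fun m => gg m x := by
  obtain ⟨B, hB, h⟩ := gg_bounds
  refine Summable.of_norm_bounded (g := fun m => B * (((m:ℝ)+1)^5 * (1/2)^m)) 
    ((summ_pow 5 (r := 1/2) (by norm_num) (by norm_num)).mul_left B) (fun m => ?_)
  rw [← mul_assoc]
  exact (h m).1 x

lemma AA_hasDeriv (x : ℝ) : HasDerivAt AA (GG x) x := by
  obtain ⟨B, hB, h⟩ := gg_bounds
  exact hasDerivAt_tsum (u := fun m : ℕ => B * (((m:ℝ)+1)^5 * (1/2)^m)) 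
    ((summ_pow 5 (r := 1/2) (by norm_num) (by norm_num)).mul_left B)
    (fun m y => aa_hasDeriv m y) (fun m y => by rw [← mul_assoc]; exact (h m).1 y)
    (aa_summable 0) x

lemma GG_holder {α : ℝ} (h0 : 0 < α) (h1 : α < 1) :
    ∃ C, 0 ≤ C ∧ ∀ x y, |GG x - GG y| ≤ C * |x - y| ^ α := by
  obtain ⟨B, hB, h⟩ := gg_bounds
  set r : ℝ := (1/2) ^ (1 - α) with hr
  have r0 : 0 < r := by positivity
  have r1 : r < 1 := Real.rpow_lt_one (by norm_num) (by norm_num) (by linarith)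
  have hs := (summ_pow 5 r0.le r1).mul_left (2 * B)
  refine ⟨∑' m : ℕ, 2 * B * (((m:ℝ)+1)^5 * r^m), tsum_nonneg fun m => by positivity, fun x y => ?_⟩
  unfold GG
  rw [← (gg_summable x).tsum_sub (gg_summable y), ← tsum_mul_right]
  rw [← Real.norm_eq_abs]
  refine tsum_of_norm_bounded (hs.mul_right _).hasSum fun m => ?_
  rw [Real.norm_eq_abs]
  set P := B * ((m:ℝ)+1)^5 with hP
  have hP0 : 0 ≤ P := by positivity
  have b1 : |gg m x - gg m y| ≤ 2 * P * (1/2)^m := by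
    have := abs_sub (gg m x) (gg m y)
    have := (h m).1 x
    have := (h m).1 y
    linarith
  have b2 : |gg m x - gg m y| ≤ 2 * P * |x - y| := by
    have := (h m).2 x y
    have : 0 ≤ P * |x - y| := by positivity
    linarith
  set d := |gg m x - gg m y|
  have hd : 0 ≤ d := abs_nonneg _
  have e : d = d ^ (1 - α) * d ^ α := by
    rw [← Real.rpow_add_of_nonneg hd (by linarith) h0.le]; simp
  have e2 : (2 * P) ^ (1-α) * (2*P)^α = 2 * P := by
    rw [← Real.rpow_add_of_nonneg (by positivity) (by linarith) h0.le]; simp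
  calc d = d ^ (1 - α) * d ^ α := e
    _ ≤ (2 * P * (1/2)^m) ^ (1 - α) * (2 * P * |x-y|) ^ α := by
      have : 0 ≤ 1 - α := by linarith
      gcongr
    _ = ((2 * P) ^ (1-α) * (2*P)^α) * (((1/2:ℝ)^m)^(1-α)) * |x-y|^α := by
      rw [Real.mul_rpow (by positivity : 0 ≤ 2 * P) (by positivity : (0:ℝ) ≤ (1/2)^m),
        Real.mul_rpow (by positivity : 0 ≤ 2 * P) (abs_nonneg (x - y))]
      ring
    _ = 2 * P * r^m * |x-y|^α := by
      rw [e2, hr, ← Real.rpow_natCast, ← Real.rpow_natCast, ← Real.rpow_mul (by norm_num),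
        ← Real.rpow_mul (by norm_num), mul_comm (m:ℝ)]
    _ = _ := by rw [hP]; ring

lemma sin_pos_par {k : ℤ} {u : ℝ} (h1 : (k:ℝ) ≤ u) (h2 : u ≤ k + 1) (hk : k % 2 = 0) :
    0 ≤ Real.sin (Real.pi * u) := by
  have e : Real.pi * u = Real.pi * (u - k) + k * Real.pi := by ring
  rw [e, Real.sin_add_int_mul_pi, (Int.even_iff.2 hk).neg_one_zpow, one_mul]
  apply Real.sin_nonneg_of_nonneg_of_le_pi
  · have := Real.pi_pos; have : 0 ≤ u - k := by linarith
    positivity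
  · nlinarith [Real.pi_pos]

lemma sin_neg_par {k : ℤ} {u : ℝ} (h1 : (k:ℝ) ≤ u) (h2 : u ≤ k + 1) (hk : k % 2 = 1) :
    Real.sin (Real.pi * u) ≤ 0 := by
  have e : Real.pi * u = Real.pi * (u - (k + 1 : ℤ)) + (k + 1 : ℤ) * Real.pi := by ring
  rw [e, Real.sin_add_int_mul_pi, (Int.even_iff.2 (by omega : (k+1) % 2 = 0)).neg_one_zpow, one_mul]
  push_cast
  apply Real.sin_nonpos_of_nonpos_of_neg_pi_le
  · have := Real.pi_pos; nlinarith
  · nlinarith [Real.pi_pos]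

def moat (m : ℕ) : Set ℝ := {x | |Real.sin (th m x)| < dl m}

lemma not_moat {m : ℕ} {x : ℝ} (h : x ∉ moat m) : 1 ≤ |Real.sin (th m x) / dl m| := by
  simp only [moat, mem_ofPred_eq, not_lt] at h
  rw [abs_div, abs_of_pos (dl_pos m), le_div_iff₀ (dl_pos m)]; linarith

lemma gg_zero {m : ℕ} {x : ℝ} (h : x ∉ moat m) : gg m x = 0 := by
  unfold gg; rw [FF_deriv_zero m (not_moat h)]; simp

def bb (m : ℕ) (x : ℝ) : ℤ := ⌊(2:ℝ) ^ m * x⌋ % 2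

lemma aa_dig {m : ℕ} {x : ℝ} (h : x ∉ moat m) : aa m x = (1/4) ^ m * (bb m x : ℝ) := by
  have h1 := not_moat h
  have f1 := Int.floor_le ((2:ℝ) ^ m * x)
  have f2 := (Int.lt_floor_add_one ((2:ℝ) ^ m * x)).le
  unfold aa
  congr 1
  rcases Int.emod_two_eq_zero_or_one ⌊(2:ℝ) ^ m * x⌋ with hk | hk
  · have : 0 ≤ Real.sin (th m x) / dl m := div_nonneg (sin_pos_par f1 f2 hk) (dl_pos m).le
    rw [abs_of_nonneg this] at h1
    rw [FF_of_ge m h1, bb, hk]; simp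
  · have : Real.sin (th m x) / dl m ≤ 0 :=
      div_nonpos_of_nonpos_of_nonneg (sin_neg_par f1 f2 hk) (dl_pos m).le
    rw [abs_of_nonpos this] at h1
    rw [FF_of_le m (by linarith), bb, hk]; simp

lemma floor_lt {m : ℕ} {x : ℝ} (h : x ∉ moat m) : (⌊(2:ℝ) ^ m * x⌋ : ℝ) < 2 ^ m * x := by
  rcases (Int.floor_le ((2:ℝ) ^ m * x)).lt_or_eq with h1 | h1
  · exact h1
  · exfalso; apply h
    simp only [moat, mem_ofPred_eq, th]
    rw [← h1, mul_comm, Real.sin_int_mul_pi]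
    simpa using dl_pos m

lemma aa_int {m n : ℕ} (hmn : n ≤ m) {x : ℝ} {k : ℤ} (h : (2:ℝ) ^ n * x = k) :
    aa m x = (1/4) ^ m * (-m : ℝ) := by
  unfold aa
  have : th m x = ((2 ^ (m - n) * k : ℤ) : ℝ) * Real.pi := by
    unfold th
    push_cast
    rw [← h, ← mul_assoc ((2:ℝ) ^ (m-n)), ← pow_add, Nat.sub_add_cancel hmn]; ring
  rw [this, Real.sin_int_mul_pi, zero_div, FF_zero]

lemma taylor : ∃ B : ℝ, 0 ≤ B ∧ ∀ (m : ℕ) (x y : ℝ),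
    aa m y - aa m x - gg m x * (y - x) ≤ B * ((m:ℝ)+1)^5 * |y - x| ^ 2 := by
  obtain ⟨B, hB, h⟩ := gg_bounds
  refine ⟨B, hB, fun m x y => ?_⟩
  have hd : ∀ z, HasDerivAt (fun z => aa m z - gg m x * z) (gg m z - gg m x * 1) z := fun z =>
    (aa_hasDeriv m z).sub ((hasDerivAt_id z).const_mul _)
  have := (convex_uIcc x y).norm_image_sub_le_of_norm_hasDerivWithin_le
    (C := B * ((m:ℝ)+1)^5 * |y - x|) (fun z _ => (hd z).hasDerivWithinAt) (fun z hz => by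
      rw [mul_one, Real.norm_eq_abs]
      refine ((h m).2 z x).trans ?_
      have := abs_sub_left_of_mem_uIcc hz
      gcongr) left_mem_uIcc right_mem_uIcc
  rw [Real.norm_eq_abs, Real.norm_eq_abs] at this
  calc _ = (aa m y - gg m x * y) - (aa m x - gg m x * x) := by ring
    _ ≤ _ := (le_abs_self _).trans this
    _ = _ := by ring

lemma tail_sum (n : ℕ) (c : ℝ) :
    HasSum (fun m : ℕ => if m < n then 0 else c * (1/4:ℝ)^m) (c * (1/4)^n * (4/3)) := by
  rw [← hasSum_nat_add_iff' n]
  have e : ∑ i ∈ Finset.range n, (if i < n then 0 else c * (1/4:ℝ)^i) = 0 :=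
    Finset.sum_eq_zero fun i hi => by simp [Finset.mem_range.1 hi]
  rw [e, sub_zero]
  have := (hasSum_geometric_of_lt_one (r := (1/4:ℝ)) (by norm_num) (by norm_num)).mul_left
    (c * (1/4)^n)
  have e3 : c * (1/4:ℝ)^n * (4/3) = c * (1/4)^n * (1 - 1/4)⁻¹ := by norm_num
  rw [e3]
  refine this.congr_fun fun m => ?_
  have : ¬ (m + n < n) := by omega
  rw [if_neg this, pow_add]; ring

lemma cell_bound {x : ℝ} {N : ℕ} (hN : ∀ m ≥ N, x ∉ moat m) (hG : GG x = 0) :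
    ∃ B : ℝ, ∀ n ≥ N, ∀ y : ℝ, (⌊(2:ℝ)^n * x⌋ : ℝ) ≤ 2^n * y → 2^n * y ≤ ⌊(2:ℝ)^n * x⌋ + 1 →
      AA y ≤ AA x + B * (1/4)^n ∧
      ((2:ℝ)^n * y = ⌊(2:ℝ)^n * x⌋ ∨ (2:ℝ)^n * y = ⌊(2:ℝ)^n * x⌋ + 1 →
        AA y ≤ AA x + (B - n) * (1/4)^n) := by
  obtain ⟨L, hL, ht⟩ := taylor
  refine ⟨∑ m ∈ Finset.range N, L * ((m:ℝ)+1)^5 + 4/3, fun n hn y hy1 hy2 => ?_⟩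
  have fl := Int.floor_le ((2:ℝ)^n * x)
  have fu := (Int.lt_floor_add_one ((2:ℝ)^n * x)).le
  have h4 : (0:ℝ) < (1/4)^n := by positivity
  have hyx : |y - x| ^ 2 ≤ (1/4:ℝ)^n := by
    have e : (1/4:ℝ)^n = ((1/2)^n)^2 := by rw [← pow_mul, mul_comm, pow_mul]; norm_num
    have e1 : (1/2:ℝ)^n * 2^n = 1 := by rw [← mul_pow]; norm_num
    rw [e]
    have h2 : (0:ℝ) < (1/2)^n := by positivity
    have : |2^n * y - 2^n * x| ≤ 1 := by rw [abs_le]; constructor <;> linarith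
    rw [← mul_sub, abs_mul, abs_of_pos (by positivity : (0:ℝ) < 2^n)] at this
    have : |y - x| ≤ (1/2)^n := by
      calc |y - x| = (1/2:ℝ)^n * (2^n * |y-x|) := by rw [← mul_assoc, e1, one_mul]
        _ ≤ (1/2:ℝ)^n * 1 := by gcongr
        _ = _ := mul_one _
    gcongr
  have main : ∀ c : ℝ, (∀ m ≥ n, aa m y - aa m x ≤ c * (1/4)^m) →
      AA y ≤ AA x + (∑ m ∈ Finset.range N, L * ((m:ℝ)+1)^5 + c * (4/3)) * (1/4)^n := by
    intro c hc
    have s1 : HasSum (fun m => aa m y - aa m x - gg m x * (y - x)) (AA y - AA x - GG x * (y - x)) :=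
      ((aa_summable y).hasSum.sub (aa_summable x).hasSum).sub ((gg_summable x).hasSum.mul_right _)
    have s2 : HasSum (fun m : ℕ => if m < N then L * ((m:ℝ)+1)^5 * (1/4)^n else 0)
        (∑ m ∈ Finset.range N, (if m < N then L * ((m:ℝ)+1)^5 * (1/4)^n else 0)) :=
      hasSum_sum_of_ne_finset_zero fun m hm => by simp at hm; simp; omega
    have s3 := s2.add (tail_sum n c)
    have := hasSum_le (fun m => ?_) s1 s3
    · rw [hG, zero_mul, sub_zero] at this
      have e : (∑ m ∈ Finset.range N, (if m < N then L * ((m:ℝ)+1)^5 * (1/4:ℝ)^n else 0)) =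
          (∑ m ∈ Finset.range N, L * ((m:ℝ)+1)^5) * (1/4)^n := by
        rw [Finset.sum_mul]
        exact Finset.sum_congr rfl fun m hm => by simp [Finset.mem_range.1 hm]
      rw [e] at this
      linarith
    · by_cases h1 : m < N
      · have h2 : m < n := by omega
        simp only [h1, h2, if_true, add_zero]
        refine (ht m x y).trans ?_
        gcongr
      · have hm := hN m (by omega)
        rw [gg_zero hm, zero_mul, sub_zero]
        by_cases h2 : m < n
        · simp only [h1, h2, if_true, if_false, add_zero, sub_nonpos]
          rw [aa_dig hm]
          unfold aa
          refine mul_le_mul_of_nonneg_left ?_ (by positivity)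
          rcases Int.emod_two_eq_zero_or_one ⌊(2:ℝ) ^ m * x⌋ with hk | hk
          · rw [bb, hk, Int.cast_zero]
            apply FF_nonpos
            refine div_nonneg ?_ (dl_pos m).le
            have p : (2:ℝ)^n = 2^(n-m) * 2^m := by rw [← pow_add, Nat.sub_add_cancel h2.le]
            have q : (0:ℝ) < 2^(n-m) := by positivity
            refine sin_pos_par (k := ⌊(2:ℝ) ^ m * x⌋) ?_ ?_ hk
            · have : (2^(n-m) * ⌊(2:ℝ) ^ m * x⌋ : ℤ) ≤ ⌊(2:ℝ) ^ n * x⌋ := by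
                rw [Int.le_floor]; push_cast
                rw [p, mul_assoc]
                gcongr; exact Int.floor_le _
              have : (2^(n-m) * ⌊(2:ℝ) ^ m * x⌋ : ℝ) ≤ ⌊(2:ℝ) ^ n * x⌋ := by exact_mod_cast this
              have := this.trans hy1
              rw [p, mul_assoc] at this
              exact le_of_mul_le_mul_left this q
            · have : ⌊(2:ℝ) ^ n * x⌋ < (2^(n-m) * (⌊(2:ℝ) ^ m * x⌋ + 1) : ℤ) := by
                rw [Int.floor_lt]; push_cast
                rw [p, mul_assoc]
                gcongr; exact Int.lt_floor_add_one _
              have : (⌊(2:ℝ) ^ n * x⌋ : ℝ) + 1 ≤ (2^(n-m) * (⌊(2:ℝ) ^ m * x⌋ + 1)) := by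
                exact_mod_cast this
              have := hy2.trans this
              rw [p, mul_assoc] at this
              exact le_of_mul_le_mul_left this q
          · rw [bb, hk, Int.cast_one]; exact FF_le_one _ _
        · simp only [h1, h2, if_false, zero_add]
          exact hc m (by omega)
  have hax : ∀ m ≥ n, 0 ≤ aa m x := fun m hm => by
    rw [aa_dig (hN m (by omega))]
    have : (0:ℤ) ≤ bb m x := Int.emod_nonneg _ (by norm_num)
    have : (0:ℝ) ≤ bb m x := by exact_mod_cast this
    positivity
  constructor
  · refine (main 1 fun m hm => ?_).trans (by rw [one_mul])
    have h1 : aa m y ≤ 1 * (1/4)^m := by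
      rw [one_mul]; unfold aa
      exact mul_le_of_le_one_right (by positivity) (FF_le_one _ _)
    linarith [hax m hm]
  · intro hedge
    refine (main (-n) fun m hm => ?_).trans ?_
    · have : aa m y = (1/4) ^ m * (-m : ℝ) := by
        rcases hedge with h | h
        · exact aa_int hm h
        · exact aa_int hm (k := ⌊(2:ℝ)^n * x⌋ + 1) (by rw [h]; push_cast; ring)
      rw [this]
      have hmn : (n:ℝ) ≤ m := by exact_mod_cast hm
      have := mul_le_mul_of_nonneg_left hmn (by positivity : (0:ℝ) ≤ (1/4)^m)
      linarith [hax m hm]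
    · have hn0 : (0:ℝ) ≤ n := Nat.cast_nonneg n
      gcongr
      linarith

lemma dl_le_one (m : ℕ) : dl m ≤ 1 := by
  unfold dl
  rw [div_le_one (by positivity)]
  have := Nat.cast_nonneg (α := ℝ) m
  nlinarith

lemma moat_cover (m : ℕ) : moat m ∩ Icc 0 1 ⊆
    ⋃ k ∈ Finset.range (2 ^ m + 1), Metric.ball ((k:ℝ) * (1/2)^m) (dl m / 2 * (1/2)^m) := by
  rintro x ⟨hx, hx0, hx1⟩
  have hp : (0:ℝ) < 2 ^ m := by positivity
  set u := (2:ℝ)^m * x with hu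
  have hu0 : 0 ≤ u := by positivity
  have hu1 : u ≤ 2 ^ m := by nlinarith
  have hr := abs_sub_round u
  have h1 : 2 * |u - round u| ≤ |Real.sin (Real.pi * u)| := by
    have e : Real.pi * u = Real.pi * (u - round u) + round u * Real.pi := by ring
    rw [e, Real.sin_add_int_mul_pi, abs_mul, abs_neg_one_zpow, one_mul]
    have h := Real.mul_abs_le_abs_sin (x := Real.pi * (u - round u)) (by
      rw [abs_mul, abs_of_pos Real.pi_pos]
      nlinarith [Real.pi_pos])
    rw [abs_mul, abs_of_pos Real.pi_pos] at h
    have := Real.pi_pos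
    calc _ = 2 / Real.pi * (Real.pi * |u - round u|) := by field_simp
      _ ≤ _ := h
  have hx' : |Real.sin (Real.pi * u)| < dl m := hx
  have h2 : |u - round u| < dl m / 2 := by linarith
  have h3 : 0 ≤ round u := by rw [round_eq]; exact Int.floor_nonneg.2 (by linarith)
  have h4 : round u ≤ 2 ^ m := by
    have : round u < 2 ^ m + 1 := by
      rw [round_eq, Int.floor_lt]; push_cast; linarith
    omega
  obtain ⟨k, hk⟩ := Int.eq_ofNat_of_zero_le h3
  simp only [mem_iUnion, Finset.mem_range, Metric.mem_ball, Real.dist_eq]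
  refine ⟨k, ?_, ?_⟩
  · rw [hk] at h4; exact Nat.lt_succ_of_le (by exact_mod_cast h4)
  · have e1 : (1/2:ℝ)^m * 2^m = 1 := by rw [← mul_pow]; norm_num
    rw [hk] at h2
    push_cast at h2
    calc |x - k * (1/2)^m| = |(u - k) * (1/2)^m| := by
            congr 1; rw [hu, sub_mul]
            linear_combination (-x) * e1
      _ = |u - k| * (1/2)^m := by rw [abs_mul, abs_of_pos (by positivity : (0:ℝ) < (1/2)^m)]
      _ < _ := by gcongr

lemma moat_vol (m : ℕ) : volume (moat m ∩ Icc 0 1) ≤ ENNReal.ofReal (2 * dl m) := by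
  refine (measure_mono (moat_cover m)).trans ?_
  refine (measure_biUnion_finset_le _ _).trans ?_
  simp only [Real.volume_ball, Finset.sum_const, Finset.card_range, nsmul_eq_mul]
  rw [← ENNReal.ofReal_natCast, ← ENNReal.ofReal_mul (by positivity)]
  apply ENNReal.ofReal_le_ofReal
  have e1 : (1/2:ℝ)^m * 2^m = 1 := by rw [← mul_pow]; norm_num
  have e2 : (1/2:ℝ)^m ≤ 1 := pow_le_one₀ (by norm_num) (by norm_num)
  have := dl_pos m
  push_cast
  calc ((2:ℝ)^m + 1) * (2 * (dl m / 2 * (1/2)^m)) = dl m * ((1/2)^m * 2^m + (1/2)^m) := by ring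
    _ ≤ dl m * (1 + 1) := by rw [e1]; gcongr
    _ = _ := by ring

lemma dl_hasSum : HasSum (fun m => 2 * dl m) (2 * (Real.pi^2/6/16)) := by
  have h := hasSum_zeta_two
  have h1 := (hasSum_nat_add_iff' 1).2 h
  simp only [Finset.range_one, Finset.sum_singleton] at h1
  have := (h1.div_const 16).mul_left 2
  have e : 2 * (Real.pi^2/6/16) = 2 * ((Real.pi ^ 2 / 6 - 1 / ((0:ℕ):ℝ) ^ 2) / 16) := by simp
  rw [e]
  refine this.congr_fun fun m => ?_
  unfold dl; push_cast; field_simp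

lemma moat_sum : ∑' m, volume (moat m ∩ Icc 0 1) < 1 := by
  have h1 : ∑' m, volume (moat m ∩ Icc 0 1) ≤ ∑' m, ENNReal.ofReal (2 * dl m) :=
    ENNReal.tsum_le_tsum moat_vol
  refine h1.trans_lt ?_
  rw [← ENNReal.ofReal_tsum_of_nonneg (fun m => by have := dl_pos m; positivity) dl_hasSum.summable,
    dl_hasSum.tsum_eq, ENNReal.ofReal_lt_one]
  nlinarith [Real.pi_lt_d2, Real.pi_pos]

def bad : Set ℝ := {x | ∃ᶠ m in Filter.atTop, x ∈ moat m ∩ Icc 0 1}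

lemma bad_null : volume bad = 0 :=
  measure_setOfPred_frequently_eq_zero (ne_top_of_lt moat_sum)

lemma good {x : ℝ} (hx : x ∈ Icc (0:ℝ) 1) (h : x ∉ bad) : ∃ N, ∀ m ≥ N, x ∉ moat m := by
  simp only [bad, mem_ofPred_eq, Filter.not_frequently, Filter.eventually_atTop] at h
  obtain ⟨N, hN⟩ := h
  exact ⟨N, fun m hm hh => hN m hm ⟨hh, hx⟩⟩

def CC : Set ℝ := {x | x ∈ Icc (0:ℝ) 1 ∧ ∀ m, x ∉ moat m}

lemma moat_open (m : ℕ) : IsOpen (moat m) := by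
  unfold moat th
  exact isOpen_lt (by fun_prop) continuous_const

lemma CC_eq : CC = Icc 0 1 \ ⋃ m, (moat m ∩ Icc 0 1) := by
  ext x
  simp only [CC, mem_ofPred_eq, mem_sdiff, mem_iUnion, mem_inter_iff, not_exists, not_and]
  exact ⟨fun h => ⟨h.1, fun m hm => absurd hm (h.2 m)⟩, fun h => ⟨h.1, fun m hm => h.2 m hm h.1⟩⟩

lemma CC_meas : MeasurableSet CC := by
  rw [CC_eq]
  exact measurableSet_Icc.diff (MeasurableSet.iUnion fun m => (moat_open m).measurableSet.inter measurableSet_Icc)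

lemma CC_pos : 0 < volume CC := by
  rw [CC_eq]
  refine lt_of_lt_of_le ?_ le_measure_sdiff
  rw [Real.volume_Icc]
  simp only [sub_zero, ENNReal.ofReal_one, tsub_pos_iff_lt]
  exact (measure_iUnion_le _).trans_lt moat_sum

abbrev E2 := EuclideanSpace ℝ (Fin 2)

def ff (p : E2) : ℝ := AA (p 0) + 2 * AA (p 1)

def pr (i : Fin 2) : E2 →L[ℝ] ℝ := EuclideanSpace.proj i
lemma pr_apply (i : Fin 2) (p : E2) : pr i p = p i := rfl

def dff (p : E2) : E2 →L[ℝ] ℝ := GG (p 0) • pr 0 + (2 * GG (p 1)) • pr 1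

lemma ff_hasFDeriv (p : E2) : HasFDerivAt ff (dff p) p := by
  have h0 := (AA_hasDeriv (p 0)).comp_hasFDerivAt p (pr 0).hasFDerivAt
  have h1 := ((AA_hasDeriv (p 1)).const_mul 2).comp_hasFDerivAt p (pr 1).hasFDerivAt
  exact h0.add h1

lemma GG_continuous : Continuous GG := by
  obtain ⟨B, hB, h⟩ := gg_bounds
  refine continuous_tsum (u := fun m : ℕ => B * (((m:ℝ)+1)^5 * (1/2)^m)) (fun m => ?_) 
    ((summ_pow 5 (r := 1/2) (by norm_num) (by norm_num)).mul_left B)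
    (fun m y => by rw [← mul_assoc]; exact (h m).1 y)
  exact (LipschitzWith.of_dist_le' (K := B * ((m:ℝ)+1)^5) fun x y => by
    simpa [Real.dist_eq] using (h m).2 x y).continuous

lemma dff_continuous : Continuous dff := by
  unfold dff
  have := GG_continuous
  have h0 : Continuous fun p : E2 => p 0 := (pr 0).continuous
  have h1 : Continuous fun p : E2 => p 1 := (pr 1).continuous
  exact ((this.comp h0).smul continuous_const).add
    ((continuous_const.mul (this.comp h1)).smul continuous_const)

lemma ff_continuous : Continuous ff :=
  (fun p => (ff_hasFDeriv p).continuousAt : ∀ p, ContinuousAt ff p) |> continuous_iff_continuousAt.2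

lemma sq_unique : UniqueDiffOn ℝ unitSquare := by
  apply uniqueDiffOn_convex
  · intro x hx y hy a b ha hb hab i
    exact (convex_Icc (0:ℝ) 1) (hx i) (hy i) ha hb hab
  · have ho : IsOpen {x : E2 | (0 < x 0 ∧ x 0 < 1) ∧ (0 < x 1 ∧ x 1 < 1)} := by
      have h0 : Continuous fun p : E2 => p 0 := (pr 0).continuous
      have h1 : Continuous fun p : E2 => p 1 := (pr 1).continuous
      exact ((isOpen_lt continuous_const h0).inter (isOpen_lt h0 continuous_const)).inter
        ((isOpen_lt continuous_const h1).inter (isOpen_lt h1 continuous_const))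
    refine ⟨!₂[1/2, 1/2], interior_maximal ?_ ho ?_⟩
    · rintro x ⟨⟨a, b⟩, c, d⟩ i
      fin_cases i
      · exact ⟨a.le, b.le⟩
      · exact ⟨c.le, d.le⟩
    · simp; norm_num

lemma ff_fderivWithin {p : E2} (hp : p ∈ unitSquare) : fderivWithin ℝ ff unitSquare p = dff p :=
  (ff_hasFDeriv p).hasFDerivWithinAt.fderivWithin (sq_unique p hp)

lemma ff_C1 {α : ℝ} (hα : α ∈ Ioo (0:ℝ) 1) : IsC1Holder ff α := by
  refine ⟨fun p _ => (ff_hasFDeriv p).differentiableAt.differentiableWithinAt, ?_, ?_⟩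
  · exact dff_continuous.continuousOn.congr fun p hp => ff_fderivWithin hp
  · obtain ⟨C, hC, h⟩ := GG_holder hα.1 hα.2
    refine ⟨C * ‖pr 0‖ + 2 * C * ‖pr 1‖, fun x hx y hy => ?_⟩
    rw [ff_fderivWithin hx, ff_fderivWithin hy]
    have hc : ∀ i, |x i - y i| ^ α ≤ dist x y ^ α := fun i => by
      refine Real.rpow_le_rpow (abs_nonneg _) ?_ hα.1.le
      rw [dist_eq_norm]
      exact PiLp.norm_apply_le (x - y) i
    have e : dff x - dff y = (GG (x 0) - GG (y 0)) • pr 0 + (2 * (GG (x 1) - GG (y 1))) • pr 1 := by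
      unfold dff
      module
    rw [e]
    refine (norm_add_le _ _).trans ?_
    rw [norm_smul, norm_smul, Real.norm_eq_abs, Real.norm_eq_abs, abs_mul, abs_two]
    have h0 : |GG (x 0) - GG (y 0)| ≤ C * dist x y ^ α := (h _ _).trans (mul_le_mul_of_nonneg_left (hc 0) hC)
    have h1 : |GG (x 1) - GG (y 1)| ≤ C * dist x y ^ α := (h _ _).trans (mul_le_mul_of_nonneg_left (hc 1) hC)
    calc _ ≤ (C * dist x y ^ α) * ‖pr 0‖ + 2 * (C * dist x y ^ α) * ‖pr 1‖ := by gcongr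
      _ = _ := by ring

lemma crit_iff (p : E2) : p ∈ critSet ff ↔ p ∈ unitSquare ∧ GG (p 0) = 0 ∧ GG (p 1) = 0 := by
  constructor
  · rintro ⟨hp, h | h⟩
    · exact absurd (ff_hasFDeriv p).differentiableAt.differentiableWithinAt h
    · rw [ff_fderivWithin hp] at h
      have h0 := congrArg (fun l => l (!₂[1, 0] : E2)) h
      have h1 := congrArg (fun l => l (!₂[0, 1] : E2)) h
      simp [dff, pr_apply] at h0 h1
      exact ⟨hp, h0, h1⟩
  · rintro ⟨hp, h0, h1⟩
    refine ⟨hp, Or.inr ?_⟩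
    rw [ff_fderivWithin hp, dff, h0, h1]; simp

lemma zero_of_scale {a : ℝ} {N : ℕ} (h : ∀ n ≥ N, |(2:ℝ)^n * a| ≤ 1) : a = 0 := by
  by_contra ha
  have ha' := abs_pos.2 ha
  obtain ⟨n, hn⟩ := exists_nat_gt (1 / |a|)
  have h1 := h (max N n) (le_max_left _ _)
  rw [abs_mul, abs_of_pos (by positivity)] at h1
  have h2 : (n:ℝ) ≤ 2 ^ (max N n) := by
    have : n ≤ 2 ^ (max N n) := (le_max_right N n).trans Nat.lt_two_pow_self.le
    exact_mod_cast this
  rw [div_lt_iff₀ ha'] at hn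
  nlinarith

lemma comp_subsing {p : E2} (hp : p ∈ critSet ff) (b0 : p 0 ∉ bad) (b1 : p 1 ∉ bad) :
    (connectedComponentIn (unitSquare ∩ ff ⁻¹' {ff p}) p).Subsingleton := by
  obtain ⟨hs, g0, g1⟩ := (crit_iff p).1 hp
  obtain ⟨N0, hN0⟩ := good (hs 0) b0
  obtain ⟨N1, hN1⟩ := good (hs 1) b1
  obtain ⟨B0, hB0⟩ := cell_bound hN0 g0
  obtain ⟨B1, hB1⟩ := cell_bound hN1 g1
  obtain ⟨M, hM⟩ := exists_nat_gt (B0 + 2 * B1)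
  set L := connectedComponentIn (unitSquare ∩ ff ⁻¹' {ff p}) p with hL
  have hLc : IsPreconnected L := isPreconnected_connectedComponentIn
  have hLs : L ⊆ unitSquare ∩ ff ⁻¹' {ff p} := connectedComponentIn_subset _ _
  have hpL : p ∈ L := mem_connectedComponentIn ⟨hs, rfl⟩
  have c0 : Continuous fun p : E2 => p 0 := (pr 0).continuous
  have c1 : Continuous fun p : E2 => p 1 := (pr 1).continuous
  have key : ∀ n ≥ max (max N0 N1) M, ∀ q ∈ L,
      |(2:ℝ)^n * (q 0 - p 0)| ≤ 1 ∧ |(2:ℝ)^n * (q 1 - p 1)| ≤ 1 := by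
    intro n hn
    have n0 : N0 ≤ n := (le_max_left _ _).trans ((le_max_left _ _).trans hn)
    have n1 : N1 ≤ n := (le_max_right _ _).trans ((le_max_left _ _).trans hn)
    have nM : M ≤ n := (le_max_right _ _).trans hn
    have nM' : B0 + 2 * B1 < n := hM.trans_le (by exact_mod_cast nM)
    have k0 := hB0 n n0
    have k1 := hB1 n n1
    have l0 := floor_lt (hN0 n n0)
    have l1 := floor_lt (hN1 n n1)
    have u0 := Int.lt_floor_add_one ((2:ℝ)^n * p 0)
    have u1 := Int.lt_floor_add_one ((2:ℝ)^n * p 1)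
    generalize (⌊(2:ℝ)^n * p 0⌋ : ℝ) = a at *
    generalize (⌊(2:ℝ)^n * p 1⌋ : ℝ) = b at *
    have e4 : (0:ℝ) < (1/4)^n := by positivity
    have hn0 : (0:ℝ) ≤ n := Nat.cast_nonneg n
    set u : Set E2 := {q | (a < 2^n * q 0 ∧ 2^n * q 0 < a + 1) ∧ (b < 2^n * q 1 ∧ 2^n * q 1 < b + 1)}
      with hu
    set w : Set E2 := {q | (a ≤ 2^n * q 0 ∧ 2^n * q 0 ≤ a + 1) ∧ (b ≤ 2^n * q 1 ∧ 2^n * q 1 ≤ b + 1)}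
      with hw
    have d0 : Continuous fun p : E2 => 2^n * p 0 := continuous_const.mul c0
    have d1 : Continuous fun p : E2 => 2^n * p 1 := continuous_const.mul c1
    have uo : IsOpen u := ((isOpen_lt continuous_const d0).inter (isOpen_lt d0 continuous_const)).inter
        ((isOpen_lt continuous_const d1).inter (isOpen_lt d1 continuous_const))
    have wc : IsClosed w := ((isClosed_le continuous_const d0).inter (isClosed_le d0 continuous_const)).inter
        ((isClosed_le continuous_const d1).inter (isClosed_le d1 continuous_const))
    have huw : u ⊆ w := fun q hq => ⟨⟨hq.1.1.le, hq.1.2.le⟩, hq.2.1.le, hq.2.2.le⟩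
    have hcov : L ⊆ u ∪ wᶜ := by
      intro q hq
      by_cases hqw : q ∈ w
      · left
        have hfq : AA (q 0) + 2 * AA (q 1) = AA (p 0) + 2 * AA (p 1) := (hLs hq).2
        obtain ⟨⟨x1, x2⟩, y1, y2⟩ := hqw
        obtain ⟨i1, i2⟩ := k0 (q 0) x1 x2
        obtain ⟨j1, j2⟩ := k1 (q 1) y1 y2
        have hlt : (B0 + 2 * B1 - n) * (1/4:ℝ)^n < 0 := mul_neg_of_neg_of_pos (by linarith) e4
        have hnn : 0 ≤ n * (1/4:ℝ)^n := by positivity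
        have nx : ¬ ((2:ℝ)^n * q 0 = a ∨ (2:ℝ)^n * q 0 = a + 1) := fun hh => by
          have := i2 hh
          linarith
        have ny : ¬ ((2:ℝ)^n * q 1 = b ∨ (2:ℝ)^n * q 1 = b + 1) := fun hh => by
          have := j2 hh
          linarith
        push Not at nx ny
        exact ⟨⟨lt_of_le_of_ne x1 (Ne.symm nx.1), lt_of_le_of_ne x2 nx.2⟩,
          lt_of_le_of_ne y1 (Ne.symm ny.1), lt_of_le_of_ne y2 ny.2⟩
      · right; exact hqw
    have hsub := hLc.subset_left_of_subset_union uo wc.isOpen_compl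
      (disjoint_compl_right_iff_subset.2 huw) hcov ⟨p, hpL, ⟨l0, u0⟩, l1, u1⟩
    intro q hq
    obtain ⟨⟨x1, x2⟩, y1, y2⟩ := hsub hq
    constructor <;> rw [mul_sub, abs_le] <;> constructor <;> linarith
  have fin : ∀ q ∈ L, q = p := by
    intro q hq
    have h0 := zero_of_scale fun n hn => (key n hn q hq).1
    have h1 := zero_of_scale fun n hn => (key n hn q hq).2
    ext i
    fin_cases i
    · exact sub_eq_zero.1 h0
    · exact sub_eq_zero.1 h1
  intro q hq r hr
  rw [fin q hq, fin r hr]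

lemma coord_null (i : Fin 2) : volume {p : E2 | p i ∈ bad} = 0 := by
  have h1 := (PiLp.volume_preserving_ofLp (Fin 2)).quasiMeasurePreserving
  have h2 := Measure.quasiMeasurePreserving_eval (fun _ : Fin 2 => (volume : Measure ℝ)) i
  exact (h2.comp h1).preimage_null bad_null

lemma weak_null : volume (critSet ff ∩ Estar ff) = 0 := by
  refine measure_mono_null ?_ (measure_union_null (coord_null 0) (coord_null 1))
  rintro p ⟨hc, hE⟩
  by_contra hne
  simp only [mem_union, mem_ofPred_eq, not_or] at hne
  have hs := comp_subsing hc hne.1 hne.2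
  have hE' : 0 < μH[1] (connectedComponentIn (unitSquare ∩ ff ⁻¹' {ff p}) p) := hE
  have := Measure.nullSingletonClass_hausdorff E2 (d := 1) one_pos
  rw [hs.measure_zero] at hE'
  exact lt_irrefl _ hE'

def KK : Set E2 := {p | p 0 ∈ CC ∧ p 1 ∈ CC}

lemma KK_crit : KK ⊆ critSet ff := by
  rintro p ⟨h0, h1⟩
  rw [crit_iff]
  refine ⟨fun i => ?_, ?_, ?_⟩
  · fin_cases i
    · exact h0.1
    · exact h1.1
  · unfold GG; simp [fun m => gg_zero (h0.2 m)]
  · unfold GG; simp [fun m => gg_zero (h1.2 m)]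

lemma KK_pos : 0 < volume KK := by
  have e : KK = (WithLp.ofLp : E2 → (Fin 2 → ℝ)) ⁻¹' (Set.univ.pi fun _ => CC) := by
    ext p; simp [KK]
  rw [e, (PiLp.volume_preserving_ofLp (Fin 2)).measure_preimage
    (MeasurableSet.univ_pi fun _ => CC_meas).nullMeasurableSet, volume_pi_pi]
  simpa using ENNReal.pow_pos CC_pos 2

lemma floor_half (N : ℕ) (x : ℝ) : ⌊(2:ℝ)^(N+1) * x⌋ = 2 * ⌊(2:ℝ)^N * x⌋ + bb (N+1) x := by
  have h1 : ⌊(2:ℝ)^(N+1) * x⌋ / 2 = ⌊(2:ℝ)^N * x⌋ := by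
    have e : (2:ℝ)^N * x = ((2:ℝ)^(N+1) * x) / (2:ℕ) := by push_cast; rw [pow_succ]; ring
    rw [e, Int.floor_div_natCast]; rfl
  unfold bb
  omega

lemma bb_range (m : ℕ) (x : ℝ) : 0 ≤ bb m x ∧ bb m x ≤ 1 := by
  unfold bb; omega

lemma floor_zero {x : ℝ} (hx : x ∈ CC) : ⌊(2:ℝ)^0 * x⌋ = bb 0 x := by
  have h0 : 0 ≤ ⌊(2:ℝ)^0 * x⌋ := Int.floor_nonneg.2 (by simpa using hx.1.1)
  have h1 : ⌊(2:ℝ)^0 * x⌋ < 2 := by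
    rw [Int.floor_lt]; have := hx.1.2; push_cast; linarith
  unfold bb; omega

def DD (m : ℕ) (p : E2) : ℤ := bb m (p 0) + 2 * bb m (p 1)
def kk : ℕ → E2 → ℤ
  | 0, p => DD 0 p
  | (N+1), p => 4 * kk N p + DD (N+1) p

lemma kk_inj {p q : E2} (hp : p ∈ KK) (hq : q ∈ KK) (N : ℕ) (h : kk N p = kk N q) :
    ⌊(2:ℝ)^N * p 0⌋ = ⌊(2:ℝ)^N * q 0⌋ ∧ ⌊(2:ℝ)^N * p 1⌋ = ⌊(2:ℝ)^N * q 1⌋ := by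
  induction N with
  | zero =>
    rw [floor_zero hp.1, floor_zero hp.2, floor_zero hq.1, floor_zero hq.2]
    simp only [kk, DD] at h
    have := bb_range 0 (p 0)
    have := bb_range 0 (p 1)
    have := bb_range 0 (q 0)
    have := bb_range 0 (q 1)
    omega
  | succ N ih =>
    rw [floor_half, floor_half, floor_half, floor_half]
    simp only [kk, DD] at h
    have := bb_range (N+1) (p 0)
    have := bb_range (N+1) (p 1)
    have := bb_range (N+1) (q 0)
    have := bb_range (N+1) (q 1)
    have := ih (by omega)
    omega

lemma kk_eq (N : ℕ) (p : E2) :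
    ∑ m ∈ Finset.range (N+1), (1/4:ℝ)^m * (DD m p : ℝ) = (1/4)^N * (kk N p : ℝ) := by
  induction N with
  | zero => simp [kk]
  | succ N ih =>
    rw [Finset.sum_range_succ, ih]
    simp only [kk]; push_cast
    rw [pow_succ]; ring

lemma DD_range (m : ℕ) (p : E2) : (0:ℝ) ≤ DD m p ∧ (DD m p : ℝ) ≤ 3 := by
  have := bb_range m (p 0)
  have := bb_range m (p 1)
  have h1 : 0 ≤ DD m p := by unfold DD; omega
  have h2 : DD m p ≤ 3 := by unfold DD; omega
  exact ⟨by exact_mod_cast h1, by exact_mod_cast h2⟩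

lemma ff_hasSum {p : E2} (hp : p ∈ KK) : HasSum (fun m => (1/4:ℝ)^m * (DD m p : ℝ)) (ff p) := by
  have := (aa_summable (p 0)).hasSum.add ((aa_summable (p 1)).hasSum.mul_left 2)
  refine this.congr_fun fun m => ?_
  rw [aa_dig (hp.1.2 m), aa_dig (hp.2.2 m), DD]; push_cast; ring

lemma ff_range {p : E2} (hp : p ∈ KK) (N : ℕ) :
    (1/4)^N * (kk N p : ℝ) ≤ ff p ∧ ff p ≤ (1/4)^N * (kk N p + 1 : ℝ) := by
  have hs := ff_hasSum hp
  constructor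
  · rw [← kk_eq]
    exact sum_le_hasSum _ (fun m _ => mul_nonneg (by positivity) (DD_range m p).1) hs
  · have s2 : HasSum (fun m : ℕ => if m < N+1 then (1/4:ℝ)^m * (DD m p : ℝ) else 0)
        (∑ m ∈ Finset.range (N+1), (if m < N+1 then (1/4:ℝ)^m * (DD m p : ℝ) else 0)) :=
      hasSum_sum_of_ne_finset_zero fun m hm => by simp at hm; simp; omega
    have s3 := s2.add (tail_sum (N+1) 3)
    have := hasSum_le (fun m => ?_) hs s3
    · have e : (∑ m ∈ Finset.range (N+1), (if m < N+1 then (1/4:ℝ)^m * (DD m p : ℝ) else 0)) =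
          (1/4)^N * (kk N p : ℝ) := by
        rw [← kk_eq]
        exact Finset.sum_congr rfl fun m hm => by rw [if_pos (Finset.mem_range.1 hm)]
      rw [e, pow_succ] at this
      linarith
    · by_cases h : m < N + 1
      · simp [h]
      · simp only [h, if_false, zero_add]
        rw [mul_comm]
        have := (DD_range m p).2
        gcongr

lemma fiber_vol (N : ℕ) (k : ℤ) :
    volume {p : E2 | p ∈ KK ∧ kk N p = k} ≤ ENNReal.ofReal (16 * (1/4)^N) := by
  rcases Set.eq_empty_or_nonempty {p : E2 | p ∈ KK ∧ kk N p = k} with h | ⟨q, hq, hqk⟩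
  · rw [h]; simp
  · have hsub : {p : E2 | p ∈ KK ∧ kk N p = k} ⊆ Metric.closedBall q (2 * (1/2)^N) := by
      rintro p ⟨hp, hpk⟩
      obtain ⟨f0, f1⟩ := kk_inj hp hq N (hpk.trans hqk.symm)
      have e1 : (1/2:ℝ)^N * 2^N = 1 := by rw [← mul_pow]; norm_num
      have hh : (0:ℝ) < (1/2)^N := by positivity
      have aux : ∀ x y : ℝ, ⌊(2:ℝ)^N * x⌋ = ⌊(2:ℝ)^N * y⌋ → |x - y| ≤ (1/2)^N := by
        intro x y h
        have h1 := (Int.abs_sub_lt_one_of_floor_eq_floor h).le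
        rw [← mul_sub, abs_mul, abs_of_pos (by positivity : (0:ℝ) < 2^N)] at h1
        calc |x - y| = (1/2:ℝ)^N * (2^N * |x-y|) := by rw [← mul_assoc, e1, one_mul]
          _ ≤ (1/2:ℝ)^N * 1 := by gcongr
          _ = _ := mul_one _
      have h0 := aux _ _ f0
      have h1 := aux _ _ f1
      rw [Metric.mem_closedBall, EuclideanSpace.dist_eq, Fin.sum_univ_two, Real.dist_eq, Real.dist_eq]
      apply Real.sqrt_le_iff.2
      refine ⟨by positivity, ?_⟩
      nlinarith [abs_nonneg (p 0 - q 0), abs_nonneg (p 1 - q 1)]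
    refine (measure_mono hsub).trans ?_
    rw [EuclideanSpace.volume_closedBall_fin_two]
    rw [← ENNReal.ofReal_pow (by positivity), ← ENNReal.ofReal_mul (by positivity)]
    apply ENNReal.ofReal_le_ofReal
    have e : (1/4:ℝ)^N = ((1/2)^N)^2 := by rw [← pow_mul, mul_comm, pow_mul]; norm_num
    rw [e, mul_pow]
    have := Real.pi_lt_four
    have : (0:ℝ) < ((1/2)^N)^2 := by positivity
    nlinarith

def nu : Measure ℝ := Measure.map ff (volume.restrict KK)

lemma nu_bound {s : Set ℝ} (N : ℕ) (hs : Metric.ediam s ≤ ENNReal.ofReal ((1/4)^N)) :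
    nu s ≤ ENNReal.ofReal (80 * (1/4)^N) := by
  have hs' : Metric.ediam (closure s) ≤ ENNReal.ofReal ((1/4)^N) := by rwa [Metric.ediam_closure]
  refine (measure_mono subset_closure).trans ?_
  have hm : MeasurableSet (closure s) := isClosed_closure.measurableSet
  rw [nu, Measure.map_apply ff_continuous.measurable hm,
    Measure.restrict_apply (ff_continuous.measurable hm)]
  rcases Set.eq_empty_or_nonempty (ff ⁻¹' closure s ∩ KK) with h | ⟨q, hqs, hqK⟩
  · rw [h]; simp
  have hsub : ff ⁻¹' closure s ∩ KK ⊆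
      ⋃ k ∈ Finset.Icc (kk N q - 2) (kk N q + 2), {p : E2 | p ∈ KK ∧ kk N p = k} := by
    rintro p ⟨hps, hpK⟩
    simp only [mem_iUnion, Finset.mem_Icc]
    refine ⟨kk N p, ?_, hpK, rfl⟩
    have h1 := (Metric.edist_le_ediam_of_mem (s := closure s) hps hqs).trans hs'
    rw [edist_dist, ENNReal.ofReal_le_ofReal_iff (by positivity), Real.dist_eq, abs_le] at h1
    have r1 := ff_range hpK N
    have r2 := ff_range hqK N
    have e4 : (0:ℝ) < (1/4)^N := by positivity
    have a1 : (kk N p : ℝ) ≤ kk N q + 2 := by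
      refine le_of_mul_le_mul_left ?_ e4
      linarith
    have a2 : (kk N q : ℝ) ≤ kk N p + 2 := by
      refine le_of_mul_le_mul_left ?_ e4
      linarith
    have a1' : kk N p ≤ kk N q + 2 := by exact_mod_cast a1
    have a2' : kk N q ≤ kk N p + 2 := by exact_mod_cast a2
    omega
  refine (measure_mono hsub).trans ((measure_biUnion_finset_le _ _).trans ?_)
  refine (Finset.sum_le_sum fun k _ => fiber_vol N k).trans ?_
  have hc : (Finset.Icc (kk N q - 2) (kk N q + 2)).card = 5 := by
    rw [Int.card_Icc]; omega
  rw [Finset.sum_const, hc, nsmul_eq_mul, ← ENNReal.ofReal_natCast,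
    ← ENNReal.ofReal_mul (by positivity)]
  apply ENNReal.ofReal_le_ofReal
  push_cast; linarith

lemma nu_le {s : Set ℝ} (hs : Metric.ediam s ≤ 1) : nu s ≤ ENNReal.ofReal 320 * Metric.ediam s := by
  have hne : Metric.ediam s ≠ ⊤ := ne_top_of_le_ne_top ENNReal.one_ne_top hs
  obtain ⟨d, hd0, hd⟩ : ∃ d : ℝ, 0 ≤ d ∧ Metric.ediam s = ENNReal.ofReal d :=
    ⟨(Metric.ediam s).toReal, ENNReal.toReal_nonneg, (ENNReal.ofReal_toReal hne).symm⟩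
  rw [hd] at hs ⊢
  rcases hd0.eq_or_lt with h0 | h0
  · have hz : ∀ N : ℕ, nu s ≤ ENNReal.ofReal (80 * (1/4)^N) := fun N =>
      nu_bound N (by rw [hd, ← h0]; simp)
    have ht : Filter.Tendsto (fun N : ℕ => ENNReal.ofReal (80 * (1/4)^N)) Filter.atTop
        (nhds (ENNReal.ofReal (80 * 0))) :=
      ENNReal.tendsto_ofReal ((tendsto_pow_atTop_nhds_zero_of_lt_one (by norm_num)
        (by norm_num)).const_mul 80)
    have := ge_of_tendsto' ht hz
    rw [← h0]; simpa using this
  · have h1 : d ≤ 1 := by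
      rwa [ENNReal.ofReal_le_one] at hs
    obtain ⟨N, hN1, hN2⟩ := exists_nat_pow_near_of_lt_one h0 h1 (by norm_num : (0:ℝ) < 1/4) (by norm_num)
    refine (nu_bound N (by rw [hd]; exact ENNReal.ofReal_le_ofReal hN2)).trans ?_
    rw [← ENNReal.ofReal_mul (by norm_num)]
    apply ENNReal.ofReal_le_ofReal
    rw [pow_succ] at hN1
    linarith

lemma nu_ac : nu ≪ volume := by
  have h : (ENNReal.ofReal 320)⁻¹ • nu ≤ (μH[1] : Measure ℝ) := by
    refine Measure.le_hausdorffMeasure 1 _ 1 one_pos fun s hs => ?_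
    rw [ENNReal.rpow_one, Measure.smul_apply, smul_eq_mul]
    rw [ENNReal.inv_mul_le_iff (by simp) (by simp)]
    exact nu_le hs
  rw [hausdorffMeasure_real] at h
  refine Measure.AbsolutelyContinuous.mk fun s _ hs => ?_
  have := h s
  rw [hs, Measure.smul_apply, smul_eq_mul, nonpos_iff_eq_zero, mul_eq_zero] at this
  rcases this with h1 | h1
  · simp at h1
  · exact h1

end SardAux

/-- There exists `f : [0,1]² → ℝ` of class `C^{1,α}` for every `α ∈ (0,1)` which has the
weak Sard property but not the relaxed Sard property. -/
theorem exists_C1Holder_weakSard_not_relaxedSard :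
    ∃ f : EuclideanSpace ℝ (Fin 2) → ℝ,
      (∀ α ∈ Set.Ioo (0:ℝ) 1, IsC1Holder f α) ∧
      (Measure.map f (volume.restrict (critSet f ∩ Estar f))).MutuallySingular volume ∧
      ¬ (Measure.map f (volume.restrict (critSet f))).MutuallySingular volume := by
  refine ⟨SardAux.ff, fun α hα => SardAux.ff_C1 hα, ?_, fun hms => ?_⟩
  · rw [Measure.restrict_eq_zero.2 SardAux.weak_null, Measure.map_zero]
    exact Measure.MutuallySingular.zero_left
  · have hle : SardAux.nu ≤ Measure.map SardAux.ff (volume.restrict (critSet SardAux.ff)) :=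
      Measure.map_mono (Measure.restrict_mono_set _ SardAux.KK_crit) SardAux.ff_continuous.measurable
    have h1 := hms.mono_ac (Measure.absolutelyContinuous_of_le hle) Measure.AbsolutelyContinuous.rfl
    have h2 := Measure.eq_zero_of_absolutelyContinuous_of_mutuallySingular SardAux.nu_ac h1
    have h3 : SardAux.nu Set.univ = volume SardAux.KK := by
      rw [SardAux.nu, Measure.map_apply SardAux.ff_continuous.measurable MeasurableSet.univ]
      simp
    rw [h2] at h3
    exact SardAux.KK_pos.ne h3
end
end

section
/- There exists a function f : [0,1] → ℝ which is Hölder continuous of every exponent α ∈ (0,1) and which does not have the relaxed Sard property, i.e. the pushforward f_#(𝟙_S L¹) is not mutually singular with the Lebesgue measure L¹ on ℝ, where S is the critical set of f. -/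
open MeasureTheory Set

noncomputable section

/-- The critical set of `f : [0,1] → ℝ`: points of `[0,1]` where `f` is either not
differentiable or has zero derivative. -/
def critSet1 (f : ℝ → ℝ) : Set ℝ :=
  {x | x ∈ Set.Icc (0:ℝ) 1 ∧
    (¬ DifferentiableWithinAt ℝ f (Set.Icc (0:ℝ) 1) x ∨
      derivWithin f (Set.Icc (0:ℝ) 1) x = 0)}

/-- `f` is Hölder continuous of exponent `α` on `[0,1]`. -/
def HolderOnUnit (f : ℝ → ℝ) (α : ℝ) : Prop :=
  ∃ C : ℝ, ∀ x ∈ Set.Icc (0:ℝ) 1, ∀ y ∈ Set.Icc (0:ℝ) 1, |f x - f y| ≤ C * |x - y| ^ α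

open Filter Topology

/-- dyadic grid of level `n` in `[0,1]` -/
def gridA (n : ℕ) : Set ℝ := (fun k : ℕ => (k : ℝ) / 2 ^ n) '' Set.Iic (2 ^ n)

def slopeL (n : ℕ) : ℝ := 8 * ((n : ℝ) + 1) * ((n : ℝ) + 2)

/-- spikes of height `2^{-n}` at the grid points of level `n` -/
def spike (n : ℕ) (x : ℝ) : ℝ := max 0 ((1 / 2 : ℝ) ^ n - slopeL n * Metric.infDist x (gridA n))

def bumpSum (x : ℝ) : ℝ := ∑' n, spike n x

def theF (x : ℝ) : ℝ := x + bumpSum x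

lemma slopeL_one_le (n : ℕ) : 1 ≤ slopeL n := by
  unfold slopeL
  have : (0 : ℝ) ≤ n := Nat.cast_nonneg n
  nlinarith

lemma gridA_nonempty (n : ℕ) : (gridA n).Nonempty := ⟨_, 0, by simp, rfl⟩

lemma spike_nonneg (n : ℕ) (x : ℝ) : 0 ≤ spike n x := le_max_left _ _

lemma spike_le (n : ℕ) (x : ℝ) : spike n x ≤ (1 / 2 : ℝ) ^ n := by
  refine max_le (by positivity) ?_
  have h1 := slopeL_one_le n
  have h2 : 0 ≤ Metric.infDist x (gridA n) := Metric.infDist_nonneg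
  nlinarith

lemma spike_lip (n : ℕ) (x y : ℝ) : |spike n x - spike n y| ≤ slopeL n * |x - y| := by
  have h1 := slopeL_one_le n
  have hx := Metric.infDist_le_infDist_add_dist (s := gridA n) (x := x) (y := y)
  have hy := Metric.infDist_le_infDist_add_dist (s := gridA n) (x := y) (y := x)
  rw [dist_comm y x] at hy
  rw [Real.dist_eq] at hx hy
  unfold spike
  rw [max_comm 0, max_comm 0]
  refine (abs_max_sub_max_le_abs _ _ _).trans ?_
  rw [abs_le]
  constructor <;> nlinarith

lemma spike_cont (n : ℕ) : Continuous (spike n) := by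
  unfold spike
  have := Metric.continuous_infDist_pt (gridA n)
  fun_prop

lemma geo_summable : Summable (fun n : ℕ => (1 / 2 : ℝ) ^ n) :=
  summable_geometric_of_lt_one (by norm_num) (by norm_num)

lemma spike_summable (x : ℝ) : Summable (fun n => spike n x) :=
  Summable.of_nonneg_of_le (fun n => spike_nonneg n x) (fun n => spike_le n x) geo_summable

lemma bumpSum_cont : Continuous bumpSum := by
  refine continuous_tsum spike_cont geo_summable ?_
  intro n x
  rw [Real.norm_eq_abs, abs_of_nonneg (spike_nonneg n x)]
  exact spike_le n x

lemma theF_cont : Continuous theF := continuous_id.add bumpSum_cont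

lemma spike_holder (α : ℝ) (hα : α ∈ Set.Ioo (0:ℝ) 1) (n : ℕ) (x y : ℝ) :
    |spike n x - spike n y| ≤ (slopeL n * ((1 / 2 : ℝ) ^ (1 - α)) ^ n) * |x - y| ^ α := by
  obtain ⟨h0, h1⟩ := hα
  set m := |spike n x - spike n y| with hm
  have hm0 : 0 ≤ m := abs_nonneg _
  have hL := slopeL_one_le n
  have ha : m ≤ (1 / 2 : ℝ) ^ n := by
    have := spike_nonneg n x
    have := spike_nonneg n y
    have := spike_le n x
    have := spike_le n y
    rw [hm, abs_le]
    constructor <;> linarith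
  have hb := spike_lip n x y
  rw [← hm] at hb
  have e : m = m ^ (1 - α) * m ^ α := by
    rw [← Real.rpow_add_of_nonneg hm0 (by linarith) h0.le]; simp
  have e1 : m ^ (1 - α) ≤ ((1 / 2 : ℝ) ^ (1 - α)) ^ n := by
    refine (Real.rpow_le_rpow hm0 ha (by linarith)).trans (le_of_eq ?_)
    rw [← Real.rpow_natCast, ← Real.rpow_natCast, ← Real.rpow_mul (by norm_num),
      ← Real.rpow_mul (by norm_num), mul_comm]
  have e2 : m ^ α ≤ slopeL n * |x - y| ^ α := by
    refine (Real.rpow_le_rpow hm0 hb h0.le).trans ?_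
    rw [Real.mul_rpow (by linarith) (abs_nonneg _)]
    refine mul_le_mul_of_nonneg_right ?_ (by positivity)
    exact Real.rpow_le_self_of_one_le hL h1.le
  calc m = m ^ (1 - α) * m ^ α := e
    _ ≤ ((1 / 2 : ℝ) ^ (1 - α)) ^ n * (slopeL n * |x - y| ^ α) := by gcongr
    _ = _ := by ring

lemma coef_summable (α : ℝ) (hα : α ∈ Set.Ioo (0:ℝ) 1) :
    Summable (fun n => slopeL n * ((1 / 2 : ℝ) ^ (1 - α)) ^ n) := by
  have hr : ‖(1 / 2 : ℝ) ^ (1 - α)‖ < 1 := by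
    rw [Real.norm_eq_abs, abs_of_nonneg (by positivity)]
    exact Real.rpow_lt_one (by norm_num) (by norm_num) (by linarith [hα.2])
  have s0 := summable_pow_mul_geometric_of_norm_lt_one 0 hr
  have s1 := summable_pow_mul_geometric_of_norm_lt_one 1 hr
  have s2 := summable_pow_mul_geometric_of_norm_lt_one 2 hr
  refine (((s2.mul_left 8).add (s1.mul_left 24)).add (s0.mul_left 16)).congr ?_
  intro n
  unfold slopeL
  ring

lemma theF_holder (α : ℝ) (hα : α ∈ Set.Ioo (0:ℝ) 1) : HolderOnUnit theF α := by
  refine ⟨1 + ∑' n, slopeL n * ((1 / 2 : ℝ) ^ (1 - α)) ^ n, ?_⟩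
  intro x hx y hy
  have hxy : |x - y| ≤ 1 := by
    rw [abs_le]; constructor <;> linarith [hx.1, hx.2, hy.1, hy.2]
  have h1 : |x - y| ≤ |x - y| ^ α := by
    exact Real.self_le_rpow_of_le_one (abs_nonneg _) hxy hα.2.le
  have hs := (coef_summable α hα).mul_right (|x - y| ^ α)
  have h2 : |bumpSum x - bumpSum y| ≤
      (∑' n, slopeL n * ((1 / 2 : ℝ) ^ (1 - α)) ^ n) * |x - y| ^ α := by
    unfold bumpSum
    rw [← (spike_summable x).tsum_sub (spike_summable y), ← tsum_mul_right, ← Real.norm_eq_abs]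
    exact tsum_of_norm_bounded hs.hasSum (fun n => spike_holder α hα n x y)
  have h3 : theF x - theF y = (x - y) + (bumpSum x - bumpSum y) := by unfold theF; ring
  rw [h3]
  refine (abs_add_le _ _).trans ?_
  linarith

lemma bumpSum_grid (n : ℕ) (y : ℝ) (hy : y ∈ gridA n) : (1 / 2 : ℝ) ^ n ≤ bumpSum y := by
  have h : spike n y = (1 / 2 : ℝ) ^ n := by
    unfold spike
    rw [Metric.infDist_zero_of_mem hy]
    simp
  rw [← h]
  exact (spike_summable y).le_tsum n (fun j _ => spike_nonneg j y)

def badB (n : ℕ) : Set ℝ := {x | Metric.infDist x (gridA n) < (1 / 2 : ℝ) ^ n / slopeL n}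

def goodK : Set ℝ := Set.Icc (0:ℝ) 1 \ ⋃ n, badB n

lemma goodK_bump {x : ℝ} (hx : x ∈ goodK) : bumpSum x = 0 := by
  have : ∀ n, spike n x = 0 := by
    intro n
    have h : x ∉ badB n := fun h => hx.2 (Set.mem_iUnion.2 ⟨n, h⟩)
    have hL := slopeL_one_le n
    simp only [badB, Set.mem_ofPred_eq, not_lt] at h
    rw [div_le_iff₀ (by linarith)] at h
    exact max_eq_left (by linarith)
  simp [bumpSum, this]

lemma goodK_grid {x : ℝ} (hx : x ∈ goodK) (n : ℕ) : x ∉ gridA n := by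
  intro h
  refine hx.2 (Set.mem_iUnion.2 ⟨n, ?_⟩)
  have hL := slopeL_one_le n
  simp only [badB, Set.mem_ofPred_eq, Metric.infDist_zero_of_mem h]
  positivity

lemma badB_measure (n : ℕ) : volume (badB n) ≤ ENNReal.ofReal (4 / slopeL n) := by
  have hL := slopeL_one_le n
  have hsub : badB n ⊆ ⋃ k ∈ Finset.range (2 ^ n + 1),
      Metric.ball ((k : ℝ) / 2 ^ n) ((1 / 2 : ℝ) ^ n / slopeL n) := by
    intro x hx
    obtain ⟨y, ⟨k, hk, rfl⟩, hd⟩ := (Metric.infDist_lt_iff (gridA_nonempty n)).1 hx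
    simp only [Set.mem_iUnion]
    exact ⟨k, by simpa [Nat.lt_succ_iff] using hk, hd⟩
  refine (measure_mono hsub).trans ((measure_biUnion_finset_le _ _).trans ?_)
  simp only [Real.volume_ball, Finset.sum_const, Finset.card_range]
  rw [← ENNReal.ofReal_nsmul]
  refine ENNReal.ofReal_le_ofReal ?_
  rw [nsmul_eq_mul]
  push_cast
  have h2 : (1 : ℝ) ≤ 2 ^ n := one_le_pow₀ (by norm_num)
  have h3 : (2 : ℝ) ^ n * (1 / 2) ^ n = 1 := by rw [← mul_pow]; norm_num
  have h4 : (1 / 2 : ℝ) ^ n ≤ 1 := pow_le_one₀ (by norm_num) (by norm_num)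
  have : ((2 : ℝ) ^ n + 1) * (2 * ((1 / 2) ^ n / slopeL n))
      = (2 * ((2 : ℝ) ^ n * (1 / 2) ^ n) + 2 * (1 / 2) ^ n) / slopeL n := by ring
  rw [this, h3]
  gcongr
  linarith

lemma union_measure : volume (⋃ n, badB n) ≤ ENNReal.ofReal (1 / 2) := by
  refine (measure_iUnion_le _).trans ?_
  refine (ENNReal.tsum_le_tsum badB_measure).trans ?_
  refine ENNReal.tsum_le_of_sum_range_le ?_
  intro n
  have hpos : ∀ i, 0 ≤ 4 / slopeL i := fun i => by
    have := slopeL_one_le i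
    positivity
  rw [← ENNReal.ofReal_sum_of_nonneg (fun i _ => hpos i)]
  refine ENNReal.ofReal_le_ofReal ?_
  have key : ∑ i ∈ Finset.range n, 4 / slopeL i = 1 / 2 - 1 / (2 * ((n : ℝ) + 1)) := by
    induction n with
    | zero => simp
    | succ k ih =>
      rw [Finset.sum_range_succ, ih]
      unfold slopeL
      push_cast
      have h1 : (k : ℝ) + 1 ≠ 0 := by positivity
      have h2 : (k : ℝ) + 2 ≠ 0 := by positivity
      have h3 : (k : ℝ) + 1 + 1 ≠ 0 := by positivity
      field_simp
      ring
  rw [key]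
  have : 0 ≤ 1 / (2 * ((n : ℝ) + 1)) := by positivity
  linarith

lemma goodK_pos : volume goodK ≠ 0 := by
  intro h
  have h1 : volume (Set.Icc (0:ℝ) 1) ≤ volume goodK + volume (⋃ n, badB n) := by
    refine (measure_mono ?_).trans (measure_union_le _ _)
    intro x hx
    by_cases hb : x ∈ ⋃ n, badB n
    · exact Or.inr hb
    · exact Or.inl ⟨hx, hb⟩
  rw [h, zero_add, Real.volume_Icc] at h1
  have h2 := h1.trans union_measure
  rw [ENNReal.ofReal_le_ofReal_iff (by norm_num)] at h2
  norm_num at h2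

lemma goodK_crit {x : ℝ} (hx : x ∈ goodK) : x ∈ critSet1 theF := by
  refine ⟨hx.1, Or.inl ?_⟩
  intro hd
  have hs := hasDerivWithinAt_iff_tendsto_slope.1 hd.hasDerivWithinAt
  set d := derivWithin theF (Set.Icc (0:ℝ) 1) x
  have hx0 : 0 ≤ x := hx.1.1
  have hx1 : x < 1 := by
    refine lt_of_le_of_ne hx.1.2 ?_
    rintro rfl
    exact goodK_grid hx 0 ⟨1, by simp, by simp⟩
  have hfx : theF x = x := by simp [theF, goodK_bump hx]
  have hpow : ∀ n : ℕ, (0 : ℝ) < 2 ^ n := fun n => by positivity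
  have hinv : ∀ n : ℕ, (1 / 2 : ℝ) ^ n = 1 / 2 ^ n := fun n => by rw [one_div_pow]
  have hgeo : Tendsto (fun n : ℕ => (1 / 2 : ℝ) ^ n) atTop (𝓝 0) :=
    tendsto_pow_atTop_nhds_zero_of_lt_one (by norm_num) (by norm_num)
  let j : ℕ → ℕ := fun n => ⌊(2 : ℝ) ^ n * x⌋₊
  let p : ℕ → ℝ := fun n => (j n : ℝ) / 2 ^ n
  let q : ℕ → ℝ := fun n => ((j n + 1 : ℕ) : ℝ) / 2 ^ n
  have hj : ∀ n, j n + 1 ≤ 2 ^ n := by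
    intro n
    have : j n < 2 ^ n := by
      rw [Nat.floor_lt (by have := hpow n; positivity)]
      push_cast
      have := hpow n
      nlinarith
    omega
  have hpA : ∀ n, p n ∈ gridA n := fun n => ⟨j n, by
    have := hj n
    simp only [Set.mem_Iic]
    omega, rfl⟩
  have hqA : ∀ n, q n ∈ gridA n := fun n => ⟨j n + 1, hj n, rfl⟩
  have hqp : ∀ n, q n = p n + (1 / 2 : ℝ) ^ n := fun n => by
    simp only [p, q, hinv]
    push_cast
    ring
  have hpx : ∀ n, p n < x := by
    intro n
    refine lt_of_le_of_ne ?_ (fun h => goodK_grid hx n (h ▸ hpA n))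
    rw [div_le_iff₀ (hpow n), mul_comm]
    exact Nat.floor_le (by have := hpow n; positivity)
  have hqx : ∀ n, x < q n := by
    intro n
    rw [lt_div_iff₀ (hpow n), mul_comm]
    push_cast
    exact Nat.lt_floor_add_one _
  have hp0 : ∀ n, 0 ≤ p n := fun n => by positivity
  have hq1 : ∀ n, q n ≤ 1 := fun n => by
    rw [div_le_one (hpow n)]
    exact_mod_cast hj n
  have hpt : Tendsto p atTop (𝓝 x) := by
    have h1 : Tendsto (fun n : ℕ => x - (1 / 2 : ℝ) ^ n) atTop (𝓝 x) := by
      simpa using (tendsto_const_nhds (x := x)).sub hgeo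
    refine tendsto_of_tendsto_of_tendsto_of_le_of_le h1 tendsto_const_nhds ?_ ?_
    · intro n
      have := hqx n
      have := hqp n
      show x - (1 / 2 : ℝ) ^ n ≤ p n
      linarith
    · exact fun n => (hpx n).le
  have hqt : Tendsto q atTop (𝓝 x) := by
    have h1 : Tendsto (fun n : ℕ => p n + (1 / 2 : ℝ) ^ n) atTop (𝓝 x) := by
      simpa using hpt.add hgeo
    exact h1.congr (fun n => (hqp n).symm)
  have hp' : Tendsto p atTop (𝓝[Set.Icc (0:ℝ) 1 \ {x}] x) :=
    tendsto_nhdsWithin_iff.2 ⟨hpt, Eventually.of_forall fun n =>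
      ⟨⟨hp0 n, ((hpx n).trans hx1).le⟩, (hpx n).ne⟩⟩
  have hq' : Tendsto q atTop (𝓝[Set.Icc (0:ℝ) 1 \ {x}] x) :=
    tendsto_nhdsWithin_iff.2 ⟨hqt, Eventually.of_forall fun n =>
      ⟨⟨hx0.trans (hqx n).le, hq1 n⟩, (hqx n).ne'⟩⟩
  have hd1 : d ≤ 0 := by
    refine le_of_tendsto (hs.comp hp') (Eventually.of_forall fun n => ?_)
    have h1 := bumpSum_grid n _ (hpA n)
    have h2 := hqp n
    have h3 := hqx n
    have h4 := hpx n
    simp only [Function.comp, slope_def_field, hfx]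
    refine div_nonpos_of_nonneg_of_nonpos ?_ (by linarith)
    simp only [theF]
    linarith
  have hd2 : 2 ≤ d := by
    refine ge_of_tendsto (hs.comp hq') (Eventually.of_forall fun n => ?_)
    have h1 := bumpSum_grid n _ (hqA n)
    have h2 := hqp n
    have h3 := hqx n
    have h4 := hpx n
    simp only [Function.comp, slope_def_field, hfx]
    rw [le_div_iff₀ (by linarith)]
    simp only [theF]
    linarith
  linarith

/-- There exists `f : [0,1] → ℝ` Hölder continuous of every exponent `α ∈ (0,1)` which does
not have the relaxed Sard property: `f_#(𝟙_S L¹)` is not mutually singular with `L¹`. -/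
theorem exists_holder_not_relaxedSard :
    ∃ f : ℝ → ℝ,
      (∀ α ∈ Set.Ioo (0:ℝ) 1, HolderOnUnit f α) ∧
      ¬ (Measure.map f (volume.restrict (critSet1 f))).MutuallySingular volume := by
  refine ⟨theF, theF_holder, ?_⟩
  rintro ⟨A, hA, h1, h2⟩
  rw [Measure.map_apply theF_cont.measurable hA,
    Measure.restrict_apply (theF_cont.measurable hA)] at h1
  apply goodK_pos
  refine measure_mono_null ?_ (measure_union_null h1 h2)
  intro x hx
  by_cases hxA : x ∈ A
  · refine Or.inl ⟨?_, goodK_crit hx⟩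
    have hfx : theF x = x := by simp [theF, goodK_bump hx]
    simpa [hfx] using hxA
  · exact Or.inr hxA
end
end

section
/- There exists a function f : [0,1] → ℝ which is Hölder continuous of every exponent α ∈ (0,1), which does not have the strong Sard property (i.e. L¹(f(S)) > 0, where S is the critical set of f), but which has the relaxed Sard property (i.e. f_#(𝟙_S L¹) ⊥ L¹). -/
open MeasureTheory Set

noncomputable section

/-- Weight of each point of dyadic level `n`. -/
def sardW (n : ℕ) : ℝ := (1/2 : ℝ) ^ n / ((n:ℝ) + 1) ^ 2

/-- The dyadic points. -/
def sardPt (p : Σ n : ℕ, Fin (2 ^ n + 1)) : ℝ := (p.2 : ℕ) / (2:ℝ) ^ p.1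

/-- The discrete (unnormalised) measure. -/
def sardM : Measure ℝ :=
  Measure.sum (fun p : Σ n : ℕ, Fin (2 ^ n + 1) =>
    ENNReal.ofReal (sardW p.1) • Measure.dirac (sardPt p))

lemma sardW_pos (n : ℕ) : 0 < sardW n := by unfold sardW; positivity

lemma sardM_apply {s : Set ℝ} (hs : MeasurableSet s) :
    sardM s = ∑' p : Σ n : ℕ, Fin (2 ^ n + 1),
      ENNReal.ofReal (sardW p.1) * s.indicator 1 (sardPt p) := by
  unfold sardM
  rw [Measure.sum_apply _ hs]
  congr 1; ext p
  rw [Measure.smul_apply, Measure.dirac_apply' _ hs, smul_eq_mul]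

lemma sardM_univ_ne_top : sardM univ ≠ ⊤ := by
  rw [sardM_apply MeasurableSet.univ, ENNReal.tsum_sigma']
  have hsum : Summable (fun n : ℕ => 2 / ((n:ℝ) + 1) ^ 2) := by
    have h := (summable_nat_add_iff 1).2 (Real.summable_one_div_nat_pow (p := 2) |>.2 (by norm_num))
    have h2 := h.mul_left 2
    refine h2.congr ?_
    intro n
    push_cast
    ring
  refine ne_top_of_le_ne_top hsum.tsum_ofReal_ne_top (ENNReal.tsum_le_tsum fun n => ?_)
  simp only [indicator_univ, Pi.one_apply, mul_one, tsum_fintype, Finset.sum_const,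
    Finset.card_univ, Fintype.card_fin]
  rw [nsmul_eq_mul, ← ENNReal.ofReal_natCast, ← ENNReal.ofReal_mul (by positivity)]
  apply ENNReal.ofReal_le_ofReal
  unfold sardW
  rw [← mul_div_assoc]
  gcongr
  push_cast
  have h1 : (2:ℝ) ^ n * (1/2) ^ n = 1 := by rw [← mul_pow]; norm_num
  have h2 : (1/2:ℝ) ^ n ≤ 1 := pow_le_one₀ (by norm_num) (by norm_num)
  nlinarith

lemma sardM_ge {s : Set ℝ} (hs : MeasurableSet s) (p : Σ n : ℕ, Fin (2 ^ n + 1))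
    (hp : sardPt p ∈ s) : ENNReal.ofReal (sardW p.1) ≤ sardM s := by
  rw [sardM_apply hs]
  refine le_trans ?_ (ENNReal.le_tsum p)
  simp [hp]

lemma sardPt_mem (p : Σ n : ℕ, Fin (2 ^ n + 1)) : sardPt p ∈ Icc (0:ℝ) 1 := by
  unfold sardPt
  refine ⟨by positivity, ?_⟩
  rw [div_le_one (by positivity)]
  have := p.2.2
  have h : (p.2 : ℕ) ≤ 2 ^ p.1 := by omega
  exact_mod_cast h

lemma sardM_null {s : Set ℝ} (hs : MeasurableSet s) (h : ∀ p, sardPt p ∉ s) : sardM s = 0 := by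
  rw [sardM_apply hs]
  simp [h]

lemma sard_bound (β : ℝ) (hβ : 1 < β) : ∃ c : ℝ, 0 < c ∧ ∀ y z : ℝ, 0 ≤ y → y < z → z ≤ 1 →
    ENNReal.ofReal (c * (z - y) ^ β) ≤ sardM (Ioc y z) := by
  have hr1 : (1/2:ℝ) ^ (β - 1) < 1 := Real.rpow_lt_one (by norm_num) (by norm_num) (by linarith)
  have hr0 : 0 < (1/2:ℝ) ^ (β - 1) := Real.rpow_pos_of_pos (by norm_num) _
  set r := (1/2:ℝ) ^ (β - 1) with hr
  have ht := tendsto_pow_const_mul_const_pow_of_abs_lt_one 2 (r := r) (by rw [abs_of_pos hr0]; exact hr1)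
  obtain ⟨B, hB⟩ := ht.bddAbove_range
  have hB' : ∀ n : ℕ, (n:ℝ) ^ 2 * r ^ n ≤ B := fun n => hB ⟨n, rfl⟩
  have hBpos : 0 < B := lt_of_lt_of_le (by positivity) (hB' 1)
  have h2 : 0 < (2:ℝ) ^ β := Real.rpow_pos_of_pos (by norm_num) _
  refine ⟨r / (B * 2 ^ β), by positivity, fun y z hy hyz hz => ?_⟩
  obtain ⟨n, hn1, hn2⟩ := exists_nat_pow_near_of_lt_one (x := z - y) (y := (1/2:ℝ))
    (by linarith) (by linarith) (by norm_num) (by norm_num)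
  set N := n + 1 with hN
  have hP : (0:ℝ) < 2 ^ N := by positivity
  have hPP : (1/2:ℝ) ^ N = 1 / 2 ^ N := by rw [one_div_pow]
  set k := ⌊z * 2 ^ N⌋₊ with hk
  have hz0 : 0 ≤ z * 2 ^ N := by nlinarith
  have hk1 : (k:ℝ) ≤ z * 2 ^ N := Nat.floor_le hz0
  have hk2 : z * 2 ^ N < k + 1 := Nat.lt_floor_add_one _
  have hk3 : k < 2 ^ N + 1 := by
    have : (k:ℝ) ≤ 2 ^ N := by nlinarith
    have : k ≤ 2 ^ N := by exact_mod_cast this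
    omega
  have hmem : sardPt ⟨N, ⟨k, hk3⟩⟩ ∈ Ioc y z := by
    unfold sardPt
    simp only
    constructor
    · rw [lt_div_iff₀ hP]
      rw [hPP, div_lt_iff₀ hP] at hn1
      nlinarith
    · rw [div_le_iff₀ hP]; exact hk1
  refine le_trans (ENNReal.ofReal_le_ofReal ?_) (sardM_ge measurableSet_Ioc _ hmem)
  simp only
  have e1 : (z - y) ^ β ≤ ((1/2:ℝ) ^ n) ^ β :=
    Real.rpow_le_rpow (by linarith) hn2 (by linarith)
  have e2 : ((1/2:ℝ) ^ n) ^ β = 2 ^ β * ((1/2) ^ N * r ^ N) := by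
    have : (1/2:ℝ) ^ n = 2 * (1/2) ^ N := by rw [hN, pow_succ]; ring
    rw [this, Real.mul_rpow (by norm_num) (by positivity)]
    congr 1
    rw [← mul_pow, ← Real.rpow_natCast, ← Real.rpow_mul (by norm_num), mul_comm, 
      Real.rpow_mul (by norm_num), Real.rpow_natCast]
    congr 1
    rw [hr, Real.rpow_sub_one (by norm_num)]
    ring
  have e3 : ((N:ℝ) + 1) ^ 2 * r ^ (N + 1) ≤ B := by exact_mod_cast hB' (N + 1)
  calc r / (B * 2 ^ β) * (z - y) ^ β ≤ r / (B * 2 ^ β) * (2 ^ β * ((1/2) ^ N * r ^ N)) := by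
        rw [← e2]; gcongr
    _ = (1/2) ^ N * r ^ (N + 1) / B := by field_simp; exact (pow_succ' r N).symm
    _ ≤ sardW N := by
        unfold sardW
        rw [div_le_div_iff₀ hBpos (by positivity)]
        have : (0:ℝ) < (1/2) ^ N := by positivity
        nlinarith

lemma exists_sard_measure : ∃ μ : Measure ℝ, IsProbabilityMeasure μ ∧
    (∃ D : Set ℝ, D.Countable ∧ μ Dᶜ = 0) ∧ μ (Iio 0) = 0 ∧ μ (Ioi 1) = 0 ∧
    ∀ β : ℝ, 1 < β → ∃ c : ℝ, 0 < c ∧ ∀ y z : ℝ, 0 ≤ y → y < z → z ≤ 1 →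
      c * (z - y) ^ β ≤ μ.real (Ioc y z) := by
  have hfin : IsFiniteMeasure sardM := ⟨sardM_univ_ne_top.lt_top⟩
  have hpos : sardM univ ≠ 0 := by
    have := sardM_ge MeasurableSet.univ ⟨0, 0⟩ (mem_univ _)
    have h2 := ENNReal.ofReal_pos.2 (sardW_pos 0)
    exact (lt_of_lt_of_le h2 this).ne'
  have hne : NeZero sardM := ⟨fun h => hpos (by rw [h]; rfl)⟩
  have hD : (range sardPt).Countable := countable_range _
  refine ⟨(sardM univ)⁻¹ • sardM, isProbabilityMeasureSMul, ⟨range sardPt, hD, ?_⟩, ?_, ?_, ?_⟩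
  · rw [Measure.smul_apply, sardM_null hD.measurableSet.compl (by simp)]; simp
  · rw [Measure.smul_apply, sardM_null measurableSet_Iio
      (fun p => by simpa using (sardPt_mem p).1)]; simp
  · rw [Measure.smul_apply, sardM_null measurableSet_Ioi
      (fun p => by simpa using (sardPt_mem p).2)]; simp
  · intro β hβ
    obtain ⟨c, hc, h⟩ := sard_bound β hβ
    have hm : 0 < ((sardM univ)⁻¹).toReal :=
      ENNReal.toReal_pos (ENNReal.inv_ne_zero.2 sardM_univ_ne_top) (ENNReal.inv_ne_top.2 hpos)
    refine ⟨((sardM univ)⁻¹).toReal * c, by positivity, fun y z hy hyz hz => ?_⟩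
    have := h y z hy hyz hz
    rw [Measure.real, Measure.smul_apply, smul_eq_mul, ENNReal.toReal_mul, mul_assoc]
    gcongr
    exact (ENNReal.ofReal_le_iff_le_toReal (measure_ne_top _ _)).1 this

lemma exists_sard_fun : ∃ f : ℝ → ℝ, Monotone f ∧ f 0 < f 1 ∧
    (∀ α ∈ Set.Ioo (0:ℝ) 1, HolderOnUnit f α) ∧
    ∃ D : Set ℝ, D.Countable ∧ volume (f ⁻¹' Dᶜ ∩ Icc 0 1) = 0 := by
  obtain ⟨μ, hμ, ⟨D, hDc, hD⟩, h0, h1, hb⟩ := exists_sard_measure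
  set G := ProbabilityTheory.cdf μ with hG
  have hG1 : G 1 = 1 := by
    rw [hG, ProbabilityTheory.cdf_eq_real]
    have : (Iic (1:ℝ)) = (Ioi 1)ᶜ := by simp
    rw [this, probReal_compl_eq_one_sub measurableSet_Ioi, Measure.real, h1]; simp
  have hGle : ∀ y, G y ≤ 1 := ProbabilityTheory.cdf_le_one μ
  have hG0 : ∀ y, 0 ≤ G y := ProbabilityTheory.cdf_nonneg μ
  have hGm : Monotone G := ProbabilityTheory.monotone_cdf μ
  have hGd : ∀ y z, y ≤ z → μ.real (Ioc y z) = G z - G y := by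
    intro y z hyz
    rw [hG, ProbabilityTheory.cdf_eq_real, ProbabilityTheory.cdf_eq_real,
      ← measureReal_sdiff (Iic_subset_Iic.2 hyz) measurableSet_Iic, Iic_sdiff_Iic]
  set A : ℝ → Set ℝ := fun x => {y | y ∈ Icc (0:ℝ) 1 ∧ min x 1 ≤ G y} with hA
  set f : ℝ → ℝ := fun x => sInf (A x) with hf
  have hA1 : ∀ x, (1:ℝ) ∈ A x := fun x => ⟨by simp, by rw [hG1]; exact min_le_right _ _⟩
  have hAb : ∀ x, BddBelow (A x) := fun x => ⟨0, fun y hy => hy.1.1⟩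
  have hf0 : ∀ x, 0 ≤ f x := fun x => le_csInf ⟨1, hA1 x⟩ fun y hy => hy.1.1
  have hf1 : ∀ x, f x ≤ 1 := fun x => csInf_le (hAb x) (hA1 x)
  have hGf : ∀ x, min x 1 ≤ G (f x) := by
    intro x
    have hrc := (G.right_continuous (f x)).mono Ioi_subset_Ici_self
    refine ge_of_tendsto hrc ?_
    filter_upwards [self_mem_nhdsWithin] with y hy
    obtain ⟨a, ha, hay⟩ := exists_lt_of_csInf_lt ⟨1, hA1 x⟩ hy
    exact ha.2.trans (hGm hay.le)
  have gal : ∀ x y, 0 ≤ y → (f x ≤ y ↔ min x 1 ≤ G y) := by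
    intro x y hy
    constructor
    · intro h; exact (hGf x).trans (hGm h)
    · intro h
      rcases le_total y 1 with h' | h'
      · exact csInf_le (hAb x) ⟨⟨hy, h'⟩, h⟩
      · exact (hf1 x).trans h'
  have hmono : Monotone f := by
    intro x x' h
    rw [gal x _ (hf0 x')]
    exact (min_le_min_right 1 h).trans (hGf x')
  refine ⟨f, hmono, ?_, ?_, D, hDc, ?_⟩
  · have e0 : f 0 = 0 := le_antisymm ((gal 0 0 le_rfl).2 (by simpa using hG0 0)) (hf0 0)
    rw [e0]
    by_contra hcon
    have := (gal 1 0 le_rfl).1 (not_lt.1 hcon)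
    obtain ⟨c, hc, h⟩ := hb 2 (by norm_num)
    have h2 := h 0 1 le_rfl one_pos le_rfl
    rw [hGd 0 1 zero_le_one] at h2
    simp at this h2
    linarith
  · rintro α ⟨hα0, hα1⟩
    obtain ⟨c, hc, h⟩ := hb (1/α) (by rw [lt_div_iff₀ hα0]; linarith)
    have key : ∀ x ∈ Icc (0:ℝ) 1, ∀ x' ∈ Icc (0:ℝ) 1, x ≤ x' →
        f x' - f x ≤ 2 * (1/c) ^ α * |x - x'| ^ α := by
      intro x hx x' hx' hxx
      rcases (hmono hxx).eq_or_lt with he | hlt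
      · rw [he, sub_self]; positivity
      set z := (f x + f x') / 2 with hz
      have hz1 : f x < z := by rw [hz]; linarith
      have hz2 : z < f x' := by rw [hz]; linarith
      have a1 := h (f x) z (hf0 x) hz1 (hz2.le.trans (hf1 x'))
      rw [hGd _ _ hz1.le] at a1
      have a2 : G z < x' := by
        by_contra hcon
        have := (gal x' z ((hf0 x).trans hz1.le)).2 ((min_le_left _ _).trans (not_lt.1 hcon))
        linarith
      have a3 : x ≤ G (f x) := by simpa [hx.2] using hGf x
      have a4 : (z - f x) ^ (1/α) ≤ (1/c) * (x' - x) := by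
        rw [one_div_mul_eq_div, le_div_iff₀ hc]; linarith
      have hzp : 0 ≤ z - f x := by linarith
      have a5 := Real.rpow_le_rpow (by positivity) a4 hα0.le
      rw [← Real.rpow_mul hzp, one_div_mul_cancel hα0.ne', Real.rpow_one,
        Real.mul_rpow (by positivity) (by linarith)] at a5
      rw [abs_sub_comm, abs_of_nonneg (sub_nonneg.2 hxx)]
      have : f x' - f x = 2 * (z - f x) := by rw [hz]; ring
      rw [this]; linarith
    refine ⟨2 * (1/c) ^ α, fun x hx y hy => ?_⟩
    rcases le_total x y with hxy | hxy
    · rw [abs_sub_comm (f x), abs_of_nonneg (sub_nonneg.2 (hmono hxy))]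
      exact key x hx y hy hxy
    · rw [abs_of_nonneg (sub_nonneg.2 (hmono hxy)), abs_sub_comm x]
      exact key y hy x hx hxy
  · have hmap : μ = Measure.map f (volume.restrict (Icc 0 1)) := by
      refine Measure.ext_of_Iic _ _ fun a => ?_
      rw [Measure.map_apply hmono.measurable measurableSet_Iic,
        Measure.restrict_apply (hmono.measurable measurableSet_Iic)]
      rcases lt_or_ge a 0 with ha | ha
      · rw [measure_mono_null (s := Iic a) (fun x hx => lt_of_le_of_lt hx ha) h0]
        have : f ⁻¹' Iic a ∩ Icc 0 1 = ∅ := by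
          ext x
          simp only [mem_inter_iff, mem_preimage, mem_Iic, mem_empty_iff_false, iff_false, not_and]
          intro h
          have := hf0 x
          linarith
        rw [this]; simp
      · have : f ⁻¹' Iic a ∩ Icc 0 1 = Icc 0 (G a) := by
          ext x
          simp only [mem_inter_iff, mem_preimage, mem_Iic, mem_Icc, gal x a ha]
          constructor
          · rintro ⟨h, hx0, hx1⟩
            rw [min_eq_left hx1] at h
            exact ⟨hx0, h⟩
          · rintro ⟨hx0, h⟩
            exact ⟨(min_le_left _ _).trans h, hx0, h.trans (hGle a)⟩
        rw [this, Real.volume_Icc, sub_zero, hG, ProbabilityTheory.ofReal_cdf]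
    have hm : MeasurableSet Dᶜ := hDc.measurableSet.compl
    rw [hmap, Measure.map_apply hmono.measurable hm,
      Measure.restrict_apply (hmono.measurable hm)] at hD
    exact hD

/-- There exists `f : [0,1] → ℝ` Hölder continuous of every exponent `α ∈ (0,1)` which does
not have the strong Sard property (`L¹(f(S)) > 0`), but has the relaxed Sard property
(`f_#(𝟙_S L¹) ⊥ L¹`). -/
theorem exists_holder_relaxedSard_not_strongSard :
    ∃ f : ℝ → ℝ,
      (∀ α ∈ Set.Ioo (0:ℝ) 1, HolderOnUnit f α) ∧
      0 < volume (f '' critSet1 f) ∧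
      (Measure.map f (volume.restrict (critSet1 f))).MutuallySingular volume := by
  obtain ⟨f, hmono, h01, hH, D, hDc, hD⟩ := exists_sard_fun
  refine ⟨f, hH, ?_, ?_⟩
  · have hcont : ContinuousOn f (Icc 0 1) := by
      obtain ⟨C, hC⟩ := hH (1/2) ⟨by norm_num, by norm_num⟩
      intro x hx
      rw [ContinuousWithinAt, tendsto_iff_dist_tendsto_zero]
      have hc : Continuous (fun y : ℝ => C * |y - x| ^ (1/2:ℝ)) :=
        continuous_const.mul ((continuous_abs.comp (continuous_id.sub continuous_const)).rpow_const
          (fun _ => Or.inr (by norm_num)))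
      have ht : Filter.Tendsto (fun y : ℝ => C * |y - x| ^ (1/2:ℝ)) (nhdsWithin x (Icc 0 1))
          (nhds 0) := by
        have := (hc.tendsto x).mono_left (nhdsWithin_le_nhds (s := Icc 0 1))
        simpa using this
      refine squeeze_zero' (Filter.Eventually.of_forall fun y => dist_nonneg) ?_ ht
      filter_upwards [self_mem_nhdsWithin] with y hy
      rw [Real.dist_eq]
      exact hC y hy x hx
    have hiv := intermediate_value_Icc zero_le_one hcont
    have hsub : Icc (f 0) (f 1) ⊆ f '' critSet1 f ∪
        (D ∪ f '' ((f ⁻¹' Dᶜ ∩ Icc 0 1) \ critSet1 f)) := by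
      intro y hy
      obtain ⟨x, hx, rfl⟩ := hiv hy
      by_cases hS : x ∈ critSet1 f
      · exact Or.inl ⟨x, hS, rfl⟩
      by_cases hd : f x ∈ D
      · exact Or.inr (Or.inl hd)
      · exact Or.inr (Or.inr ⟨x, ⟨⟨hd, hx⟩, hS⟩, rfl⟩)
    have hN : volume (f '' ((f ⁻¹' Dᶜ ∩ Icc 0 1) \ critSet1 f)) = 0 := by
      refine addHaar_image_eq_zero_of_differentiableOn_of_addHaar_eq_zero volume ?_
        (measure_mono_null sdiff_subset hD)
      rintro x ⟨⟨_, hx⟩, hS⟩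
      have : DifferentiableWithinAt ℝ f (Icc 0 1) x := by
        by_contra hcon
        exact hS ⟨hx, Or.inl hcon⟩
      exact this.mono fun z hz => hz.1.2
    by_contra hcon
    have hz : volume (f '' critSet1 f) = 0 := by simpa using hcon
    have := measure_mono_null hsub
      (measure_union_null hz (measure_union_null (hDc.measure_zero volume) hN))
    rw [Real.volume_Icc, ENNReal.ofReal_eq_zero] at this
    linarith
  · refine ⟨Dᶜ, hDc.measurableSet.compl, ?_, ?_⟩
    · rw [Measure.map_apply hmono.measurable hDc.measurableSet.compl,
        Measure.restrict_apply (hmono.measurable hDc.measurableSet.compl)]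
      exact measure_mono_null (inter_subset_inter_right _ fun x hx => hx.1) hD
    · rw [compl_compl]; exact hDc.measure_zero volume
end
end

section
/- Let f : [0,1]^2 → ℝ be continuous and monotone (i.e. every level set f⁻¹(t) is connected). Then the set N = { t ∈ f([0,1]^2) : H¹(f⁻¹(t)) = 0 } of values in the image of f whose level set has zero one-dimensional Hausdorff measure contains at most two points. -/
open MeasureTheory Set

noncomputable section

lemma seg_subset {x y : EuclideanSpace ℝ (Fin 2)} (hx : x ∈ unitSquare) (hy : y ∈ unitSquare) :
    segment ℝ x y ⊆ unitSquare := by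
  rintro _ ⟨a, b, ha, hb, hab, rfl⟩ i
  have := (convex_Icc (0:ℝ) 1) (hx i) (hy i) ha hb hab
  simpa using this

lemma eq_of_null {s : Set (EuclideanSpace ℝ (Fin 2))} (hs : IsPreconnected s)
    (h0 : μH[1] s = 0) {x y : EuclideanSpace ℝ (Fin 2)} (hx : x ∈ s) (hy : y ∈ s) : x = y := by
  by_contra hne
  have hL : LipschitzWith 1 (fun z => dist z x) := LipschitzWith.dist_left x
  have h1 := (hL.lipschitzOnWith (s := s)).hausdorffMeasure_image_le (d := 1) zero_le_one
  rw [h0, mul_zero, hausdorffMeasure_real] at h1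
  have h2 : Icc (dist x x) (dist y x) ⊆ (fun z => dist z x) '' s :=
    hs.intermediate_value hx hy hL.continuous.continuousOn
  have h3 := (measure_mono h2).trans h1
  rw [Real.volume_Icc, dist_self, sub_zero] at h3
  have h4 : 0 < dist y x := dist_pos.2 (Ne.symm hne)
  have h5 := ENNReal.ofReal_pos.2 h4
  exact absurd h3 (not_le.2 h5)

lemma exists_off {x y : EuclideanSpace ℝ (Fin 2)} (hne : x ≠ y) :
    ∃ z ∈ unitSquare, (y 0 - x 0) * (z 1 - x 1) - (y 1 - x 1) * (z 0 - x 0) ≠ 0 := by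
  by_contra! h
  have h0 := h !₂[0, 0] (by intro i; fin_cases i <;> simp)
  have h1 := h !₂[1, 0] (by intro i; fin_cases i <;> simp)
  have h2 := h !₂[0, 1] (by intro i; fin_cases i <;> simp)
  simp at h0 h1 h2
  apply hne
  ext i
  fin_cases i <;> simp <;> linarith

lemma exists_conn {x y p : EuclideanSpace ℝ (Fin 2)} (hx : x ∈ unitSquare) (hy : y ∈ unitSquare)
    (hxp : x ≠ p) (hyp : y ≠ p) :
    ∃ s ⊆ unitSquare, IsPreconnected s ∧ x ∈ s ∧ y ∈ s ∧ p ∉ s := by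
  by_cases hp : p ∈ segment ℝ x y
  · have hne : x ≠ y := by
      rintro rfl
      simp at hp
      exact hxp hp.symm
    obtain ⟨z, hz, hc⟩ := exists_off hne
    refine ⟨segment ℝ x z ∪ segment ℝ z y, union_subset (seg_subset hx hz) (seg_subset hz hy),
      (convex_segment x z).isPreconnected.union z (right_mem_segment ℝ x z)
        (left_mem_segment ℝ z y) (convex_segment z y).isPreconnected,
      Or.inl (left_mem_segment ℝ x z), Or.inr (right_mem_segment ℝ z y), ?_⟩
    obtain ⟨a, b, ha, hb, hab, hpe⟩ := hp
    have e0 : a * x 0 + b * y 0 = p 0 := by rw [← hpe]; simp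
    have e1 : a * x 1 + b * y 1 = p 1 := by rw [← hpe]; simp
    obtain rfl : a = 1 - b := by linarith
    rintro (⟨c, d, hc', hd, hcd, hq⟩ | ⟨c, d, hc', hd, hcd, hq⟩)
    · have g0 : c * x 0 + d * z 0 = p 0 := by rw [← hq]; simp
      have g1 : c * x 1 + d * z 1 = p 1 := by rw [← hq]; simp
      obtain rfl : c = 1 - d := by linarith
      have : d * ((y 0 - x 0) * (z 1 - x 1) - (y 1 - x 1) * (z 0 - x 0)) = 0 := by
        linear_combination (y 0 - x 0) * (g1 - e1) - (y 1 - x 1) * (g0 - e0)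
      have hd0 : d = 0 := (mul_eq_zero.1 this).resolve_right hc
      apply hxp
      rw [← hq, hd0]; simp
    · have g0 : c * z 0 + d * y 0 = p 0 := by rw [← hq]; simp
      have g1 : c * z 1 + d * y 1 = p 1 := by rw [← hq]; simp
      obtain rfl : d = 1 - c := by linarith
      have : c * ((y 0 - x 0) * (z 1 - x 1) - (y 1 - x 1) * (z 0 - x 0)) = 0 := by
        linear_combination (y 0 - x 0) * (g1 - e1) - (y 1 - x 1) * (g0 - e0)
      have hd0 : c = 0 := (mul_eq_zero.1 this).resolve_right hc
      apply hyp
      rw [← hq, hd0]; simp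
  · exact ⟨_, seg_subset hx hy, (convex_segment x y).isPreconnected, left_mem_segment ℝ x y,
      right_mem_segment ℝ x y, hp⟩

/-- If `f : [0,1]² → ℝ` is continuous and monotone (every level set is connected), then the
set `N` of values `t` in the image of `f` whose level set has zero one-dimensional Hausdorff
measure contains at most two points. -/
theorem negligible_values_encard_le_two (f : EuclideanSpace ℝ (Fin 2) → ℝ)
    (hf : ContinuousOn f unitSquare)
    (hmono : ∀ t : ℝ, IsPreconnected (unitSquare ∩ f ⁻¹' {t})) :
    {t : ℝ | t ∈ f '' unitSquare ∧ μH[1] (unitSquare ∩ f ⁻¹' {t}) = 0}.encard ≤ 2 := by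
  have key : ∀ a b c : ℝ, a ∈ f '' unitSquare → c ∈ f '' unitSquare →
      (b ∈ f '' unitSquare ∧ μH[1] (unitSquare ∩ f ⁻¹' {b}) = 0) → a < b → b < c → False := by
    rintro a b c ⟨x, hx, rfl⟩ ⟨y, hy, rfl⟩ ⟨⟨p, hp, rfl⟩, h0⟩ hab hbc
    obtain ⟨s, hs, hconn, hxs, hys, hps⟩ := exists_conn (p := p) hx hy
      (by rintro rfl; exact lt_irrefl _ hab) (by rintro rfl; exact lt_irrefl _ hbc)
    obtain ⟨q, hq, hqe⟩ := hconn.intermediate_value hxs hys (hf.mono hs) ⟨hab.le, hbc.le⟩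
    have : q = p := eq_of_null (hmono (f p)) h0 ⟨hs hq, hqe⟩ ⟨hp, rfl⟩
    exact hps (this ▸ hq)
  by_contra! h
  have h3 : (3 : ℕ∞) ≤ _ := Order.add_one_le_of_lt h
  obtain ⟨u, hu, hu3⟩ := Set.exists_subset_encard_eq h3
  obtain ⟨a, b, c, hab, hac, hbc, rfl⟩ := Set.encard_eq_three.1 hu3
  have ha := hu (show a ∈ _ by simp)
  have hb := hu (show b ∈ _ by simp)
  have hc := hu (show c ∈ _ by simp)
  rcases lt_or_gt_of_ne hab with h1 | h1 <;> rcases lt_or_gt_of_ne hac with h2 | h2 <;>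
    rcases lt_or_gt_of_ne hbc with h3 | h3
  · exact key a b c ha.1 hc.1 hb h1 h3
  · exact key a c b ha.1 hb.1 hc h2 h3
  · exact lt_asymm h2 (h1.trans h3)
  · exact key c a b hc.1 hb.1 ha h2 h1
  · exact key b a c hb.1 hc.1 ha h1 h2
  · exact lt_asymm h3 (h1.trans h2)
  · exact key b c a hb.1 ha.1 hc h3 h2
  · exact key c b a hc.1 ha.1 hb h3 h1
end
end

section
/- If f : [0,1] → ℝ is Lipschitz continuous, then f has the strong Sard property: L¹(f(S)) = 0, where S is the set of points at which f is either not differentiable or has f'(x) = 0. -/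
open MeasureTheory Set

noncomputable section

/-- If `f : [0,1] → ℝ` is Lipschitz continuous, then `f` has the strong Sard property:
`L¹(f(S)) = 0` where `S` is the critical set of `f`. -/
theorem lipschitz_strongSard (f : ℝ → ℝ) (K : NNReal)
    (hf : LipschitzOnWith K f (Set.Icc (0:ℝ) 1)) :
    volume (f '' critSet1 f) = 0 := by
  set I := Set.Icc (0:ℝ) 1 with hI
  set A : Set ℝ := {x | x ∈ I ∧ ¬ DifferentiableWithinAt ℝ f I x} with hA
  set B : Set ℝ := {x | x ∈ I ∧ DifferentiableWithinAt ℝ f I x ∧ derivWithin f I x = 0} with hB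
  have hsub : critSet1 f ⊆ A ∪ B := by
    intro x hx
    by_cases h : DifferentiableWithinAt ℝ f I x
    · right
      rcases hx.2 with h2 | h2
      · exact absurd h h2
      · exact ⟨hx.1, h, h2⟩
    · left
      exact ⟨hx.1, h⟩
  have hA0 : volume A = 0 := by
    have h := hf.ae_differentiableWithinAt_of_mem_real
    rw [ae_iff] at h
    refine measure_mono_null (fun x hx => ?_) h
    simp only [Set.mem_ofPred_eq, Classical.not_imp]
    exact hx
  have hfA : volume (f '' A) = 0 := by
    have hl : LipschitzOnWith K f A := hf.mono (fun x hx => hx.1)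
    have h := hl.hausdorffMeasure_image_le (d := 1) zero_le_one
    rw [hausdorffMeasure_real, hA0, mul_zero] at h
    exact le_antisymm h bot_le
  have hfB : volume (f '' B) = 0 := by
    refine addHaar_image_eq_zero_of_det_fderivWithin_eq_zero (f' := fun _ => 0) volume
      (fun x hx => ?_) (fun x hx => ?_)
    · have h := hx.2.1.hasDerivWithinAt
      rw [hx.2.2] at h
      have h2 := (h.mono (fun y (hy : y ∈ B) => hy.1)).hasFDerivWithinAt
      have h3 : (ContinuousLinearMap.toSpanSingleton ℝ (0:ℝ)) = 0 := by
        ext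
        simp
      rw [h3] at h2
      exact h2
    · simp [ContinuousLinearMap.det]
  refine measure_mono_null (Set.image_mono hsub) ?_
  rw [Set.image_union]
  exact measure_union_null hfA hfB
end
end

section
/- There exists a function f : [0,1] → ℝ, Hölder continuous of every exponent α ∈ (0,1), and a constant r > 0 such that f_#(𝟙_S L¹) = r · 𝟙_{[0,1]} L¹, where S is the critical set of f; in particular f_#(𝟙_S L¹) is absolutely continuous with respect to Lebesgue measure and nonzero. -/
open MeasureTheory Set

noncomputable section

open Filter Topology

/-- Three-fold zigzag with slopes `3, -3, 3` on every unit interval. -/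
def zig (x : ℝ) : ℝ :=
  ⌊x⌋ + max (min (3 * Int.fract x) (2 - 3 * Int.fract x)) (3 * Int.fract x - 2)

theorem zig_eq (n : ℤ) (x : ℝ) (h0 : n ≤ x) (h1 : x ≤ n + 1) :
    zig x = n + max (min (3 * (x - n)) (2 - 3 * (x - n))) (3 * (x - n) - 2) := by
  rcases h1.lt_or_eq with h | h
  · have : ⌊x⌋ = n := Int.floor_eq_iff.2 ⟨h0, h⟩
    simp only [zig, Int.fract, this]
  · have hx : x = ((n + 1 : ℤ) : ℝ) := by push_cast; exact h
    subst hx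
    simp only [zig, Int.fract, Int.floor_intCast]
    push_cast
    norm_num

theorem zig_a (n : ℤ) (x : ℝ) (h0 : n ≤ x) (h1 : x ≤ n + 1 / 3) : zig x = 3 * x - 2 * n := by
  rw [zig_eq n x h0 (by linarith), min_eq_left (by linarith), max_eq_left (by linarith)]; ring

theorem zig_b (n : ℤ) (x : ℝ) (h0 : n + 1 / 3 ≤ x) (h1 : x ≤ n + 2 / 3) :
    zig x = -3 * x + (4 * n + 2) := by
  rw [zig_eq n x (by linarith) (by linarith), min_eq_right (by linarith),
    max_eq_left (by linarith)]; ring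

theorem zig_c (n : ℤ) (x : ℝ) (h0 : n + 2 / 3 ≤ x) (h1 : x ≤ n + 1) :
    zig x = 3 * x - (2 * n + 2) := by
  rw [zig_eq n x (by linarith) (by linarith), min_eq_right (by linarith),
    max_eq_right (by linarith)]; ring

theorem zig_mem (n : ℤ) (x : ℝ) (h0 : n ≤ x) (h1 : x ≤ n + 1) :
    (n : ℝ) ≤ zig x ∧ zig x ≤ n + 1 := by
  rcases le_total x (n + 1 / 3) with h | h
  · rw [zig_a n x h0 h]; constructor <;> linarith
  · rcases le_total x (n + 2 / 3) with h' | h'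
    · rw [zig_b n x h h']; constructor <;> linarith
    · rw [zig_c n x h' h1]; constructor <;> linarith

theorem zig_int (n : ℤ) : zig n = n := by
  rw [zig_a n n le_rfl (by linarith)]; ring

theorem zig_sub (x : ℝ) : |zig x - x| ≤ 1 := by
  have h0 := Int.floor_le x
  have h1 := (Int.lt_floor_add_one x).le
  have := zig_mem _ x h0 h1
  rw [abs_le]; constructor <;> linarith

theorem zig_lip_aux (n : ℤ) (x y : ℝ) (h0 : n ≤ x) (hxy : x ≤ y) (h1 : y ≤ n + 1) :
    |zig x - zig y| ≤ 3 * (y - x) := by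
  rw [abs_le]
  rcases le_total x (n + 1 / 3) with h | h <;> rcases le_total y (n + 1 / 3) with k | k
  · rw [zig_a n x h0 h, zig_a n y (by linarith) k]; constructor <;> linarith
  · rcases le_total y (n + 2 / 3) with k' | k'
    · rw [zig_a n x h0 h, zig_b n y k k']; constructor <;> linarith
    · rw [zig_a n x h0 h, zig_c n y k' h1]; constructor <;> linarith
  · rw [zig_b n x h (by linarith), zig_a n y (by linarith) k]; constructor <;> linarith
  · rcases le_total x (n + 2 / 3) with h' | h' <;> rcases le_total y (n + 2 / 3) with k' | k'
    · rw [zig_b n x h h', zig_b n y k k']; constructor <;> linarith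
    · rw [zig_b n x h h', zig_c n y k' h1]; constructor <;> linarith
    · rw [zig_c n x h' (by linarith), zig_b n y k k']; constructor <;> linarith
    · rw [zig_c n x h' (by linarith), zig_c n y k' h1]; constructor <;> linarith

theorem zig_lip_le (x y : ℝ) (hxy : x ≤ y) : |zig x - zig y| ≤ 3 * (y - x) := by
  have a0 := Int.floor_le x
  have a1 := (Int.lt_floor_add_one x).le
  have b0 := Int.floor_le y
  have b1 := (Int.lt_floor_add_one y).le
  rcases (Int.floor_mono hxy).lt_or_eq with h | h
  · have h2 : ((⌊x⌋ : ℝ) + 1) ≤ ⌊y⌋ := by exact_mod_cast h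
    have e1 := zig_lip_aux ⌊x⌋ x ((⌊x⌋ + 1 : ℤ) : ℝ) a0 (by push_cast; exact a1)
      (by push_cast; exact le_rfl)
    have e2 := zig_lip_aux ⌊y⌋ ⌊y⌋ y le_rfl b0 b1
    rw [zig_int] at e1 e2
    push_cast at e1
    rw [abs_le] at *
    constructor <;> linarith [e1.1, e1.2, e2.1, e2.2]
  · exact zig_lip_aux ⌊x⌋ x y a0 hxy (by rw [h]; exact b1)

theorem zig_lip (x y : ℝ) : |zig x - zig y| ≤ 3 * |x - y| := by
  rcases le_total x y with h | h
  · have := zig_lip_le x y h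
    rwa [abs_sub_comm x y, abs_of_nonneg (sub_nonneg.2 h)]
  · have := zig_lip_le y x h
    rwa [abs_sub_comm, abs_of_nonneg (sub_nonneg.2 h)]

theorem zig_cont : Continuous zig := by
  have : LipschitzWith 3 zig := LipschitzWith.of_dist_le_mul fun x y => by
    simpa [Real.dist_eq] using zig_lip x y
  exact this.continuous

/-- neighbours on the `1/(3q)`-grid go to neighbours of the `1/q`-grid -/
theorem zig_nbr (q : ℤ) (hq : 0 < q) (k : ℤ) : ∃ l l' : ℤ, |l - l'| = 1 ∧
    zig (k / (3 * q)) = l / q ∧ zig ((k + 1) / (3 * q)) = l' / q := by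
  have hq' : (0:ℝ) < q := by exact_mod_cast hq
  obtain ⟨n, r, hk, hr0, hr1⟩ : ∃ n r : ℤ, k = 3 * q * n + r ∧ 0 ≤ r ∧ r < 3 * q :=
    ⟨k / (3 * q), k % (3 * q), (Int.mul_ediv_add_emod k (3 * q)).symm,
      Int.emod_nonneg _ (by omega), Int.emod_lt_of_pos _ (by omega)⟩
  have ex : (k : ℝ) / (3 * q) = n + r / (3 * q) := by
    rw [hk]; push_cast; field_simp
  have ey : ((k : ℝ) + 1) / (3 * q) = n + (r + 1) / (3 * q) := by
    rw [hk]; push_cast; field_simp; ring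
  have hr0' : (0:ℝ) ≤ r := by exact_mod_cast hr0
  have hr1' : (r:ℝ) + 1 ≤ 3 * q := by exact_mod_cast hr1
  rw [ex, ey]
  rcases lt_or_ge r q with h | h
  · have h' : (r:ℝ) + 1 ≤ q := by exact_mod_cast h
    refine ⟨q * n + r, q * n + r + 1, by simp, ?_, ?_⟩
    · rw [zig_a n]
      · push_cast; field_simp; ring
      · have : 0 ≤ (r:ℝ) / (3 * q) := by positivity
        linarith
      · have : (r:ℝ) / (3 * q) ≤ 1 / 3 := by rw [div_le_div_iff₀ (by positivity) (by norm_num)]; linarith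
        linarith
    · rw [zig_a n]
      · push_cast; field_simp; ring
      · have : 0 ≤ ((r:ℝ) + 1) / (3 * q) := by positivity
        linarith
      · have : ((r:ℝ) + 1) / (3 * q) ≤ 1 / 3 := by rw [div_le_div_iff₀ (by positivity) (by norm_num)]; linarith
        linarith
  have hh : (q:ℝ) ≤ r := by exact_mod_cast h
  rcases lt_or_ge r (2 * q) with h2 | h2
  · have h' : (r:ℝ) + 1 ≤ 2 * q := by exact_mod_cast h2
    refine ⟨q * n + 2 * q - r, q * n + 2 * q - (r + 1), by ring_nf; simp, ?_, ?_⟩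
    · rw [zig_b n]
      · push_cast; field_simp; ring
      · have : 1 / 3 ≤ (r:ℝ) / (3 * q) := by rw [div_le_div_iff₀ (by norm_num) (by positivity)]; linarith
        linarith
      · have : (r:ℝ) / (3 * q) ≤ 2 / 3 := by rw [div_le_div_iff₀ (by positivity) (by norm_num)]; linarith
        linarith
    · rw [zig_b n]
      · push_cast; field_simp; ring
      · have : 1 / 3 ≤ ((r:ℝ) + 1) / (3 * q) := by rw [div_le_div_iff₀ (by norm_num) (by positivity)]; linarith
        linarith
      · have : ((r:ℝ) + 1) / (3 * q) ≤ 2 / 3 := by rw [div_le_div_iff₀ (by positivity) (by norm_num)]; linarith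
        linarith
  · have hh2 : 2 * (q:ℝ) ≤ r := by exact_mod_cast h2
    refine ⟨q * n + r - 2 * q, q * n + r + 1 - 2 * q, by ring_nf; simp, ?_, ?_⟩
    · rw [zig_c n]
      · push_cast; field_simp; ring
      · have : 2 / 3 ≤ (r:ℝ) / (3 * q) := by rw [div_le_div_iff₀ (by norm_num) (by positivity)]; linarith
        linarith
      · have : (r:ℝ) / (3 * q) ≤ 1 := by rw [div_le_one (by positivity)]; linarith
        linarith
    · rw [zig_c n]
      · push_cast; field_simp; ring
      · have : 2 / 3 ≤ ((r:ℝ) + 1) / (3 * q) := by rw [div_le_div_iff₀ (by norm_num) (by positivity)]; linarith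
        linarith
      · have : ((r:ℝ) + 1) / (3 * q) ≤ 1 := by rw [div_le_one (by positivity)]; linarith
        linarith

theorem vol_affine (a b : ℝ) (A : Set ℝ) (ha : |a| = 3) :
    volume ((fun x => a * x + b) ⁻¹' A) = ENNReal.ofReal (1 / 3) * volume A := by
  have ha0 : a ≠ 0 := by rintro rfl; simp at ha
  have : (fun x => a * x + b) ⁻¹' A = (fun x => a * x) ⁻¹' ((fun x => x + b) ⁻¹' A) := rfl
  rw [this, Real.volume_preimage_mul_left ha0, measure_preimage_add_right, abs_inv, ha]
  norm_num

theorem vol_split (B : Set ℝ) (hB : MeasurableSet B) :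
    volume B = ∑' k : ℤ, volume (B ∩ Ico (k:ℝ) (k + 1)) := by
  conv_lhs => rw [← inter_univ B, ← iUnion_Ico_intCast ℝ, inter_iUnion]
  rw [measure_iUnion]
  · intro i j hij
    exact ((pairwise_disjoint_Ico_intCast ℝ) hij).mono inter_subset_right inter_subset_right
  · intro i
    exact hB.inter measurableSet_Ico

theorem zig_vol (A : Set ℝ) (hA : MeasurableSet A) : volume (zig ⁻¹' A) = volume A := by
  have hZ : MeasurableSet (zig ⁻¹' A) := zig_cont.measurable hA
  rw [vol_split _ hZ, vol_split A hA]
  congr 1; ext k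
  have e : zig ⁻¹' A ∩ Ico (k:ℝ) (k + 1) =
      (fun x : ℝ => 3 * x + (-2 * k)) ⁻¹' (A ∩ Ico (k:ℝ) (k + 1)) ∪
      ((fun x : ℝ => -3 * x + (4 * k + 2)) ⁻¹' (A ∩ Ioc (k:ℝ) (k + 1)) ∪
      (fun x : ℝ => 3 * x + (-(2 * k + 2))) ⁻¹' (A ∩ Ico (k:ℝ) (k + 1))) := by
    ext x
    simp only [mem_inter_iff, mem_preimage, mem_Ico, mem_Ioc, mem_union]
    constructor
    · rintro ⟨hx, h0, h1⟩
      rcases lt_or_ge x (k + 1 / 3) with h | h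
      · left
        rw [zig_a k x h0 h.le] at hx
        exact ⟨by convert hx using 1; ring, by linarith, by linarith⟩
      · right
        rcases lt_or_ge x (k + 2 / 3) with h' | h'
        · left
          rw [zig_b k x h h'.le] at hx
          exact ⟨hx, by linarith, by linarith⟩
        · right
          rw [zig_c k x h' h1.le] at hx
          exact ⟨by convert hx using 1; ring, by linarith, by linarith⟩
    · rintro (⟨hx, h0, h1⟩ | ⟨hx, h0, h1⟩ | ⟨hx, h0, h1⟩)
      · refine ⟨?_, by linarith, by linarith⟩
        rw [zig_a k x (by linarith) (by linarith)]
        convert hx using 1; ring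
      · refine ⟨?_, by linarith, by linarith⟩
        rw [zig_b k x (by linarith) (by linarith)]
        exact hx
      · refine ⟨?_, by linarith, by linarith⟩
        rw [zig_c k x (by linarith) (by linarith)]
        convert hx using 1; ring
  have m1 : MeasurableSet ((fun x : ℝ => -3 * x + (4 * k + 2)) ⁻¹' (A ∩ Ioc (k:ℝ) (k + 1))) :=
    (by fun_prop : Measurable (fun x : ℝ => -3 * x + (4 * k + 2))) (hA.inter measurableSet_Ioc)
  have m2 : MeasurableSet ((fun x : ℝ => 3 * x + (-(2 * k + 2))) ⁻¹' (A ∩ Ico (k:ℝ) (k + 1))) :=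
    (by fun_prop : Measurable (fun x : ℝ => 3 * x + (-(2 * k + 2)))) (hA.inter measurableSet_Ico)
  rw [e, measure_union _ (m1.union m2), measure_union _ m2, vol_affine _ _ _ (by norm_num),
    vol_affine _ _ _ (by norm_num), vol_affine _ _ _ (by norm_num)]
  · have : volume (A ∩ Ioc (k:ℝ) (k + 1)) = volume (A ∩ Ico (k:ℝ) (k + 1)) :=
      measure_congr ((ae_eq_refl A).inter (Ioc_ae_eq_Icc.trans Ico_ae_eq_Icc.symm))
    rw [this, ← add_mul, ← add_mul, ← ENNReal.ofReal_add (by norm_num) (by norm_num),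
      ← ENNReal.ofReal_add (by norm_num) (by norm_num)]
    norm_num
  · rw [Set.disjoint_left]
    rintro x ⟨-, a0, a1⟩ ⟨-, b0, b1⟩
    simp only at *
    linarith
  · rw [Set.disjoint_left]
    rintro x ⟨-, a0, a1⟩ (⟨-, b0, b1⟩ | ⟨-, b0, b1⟩)
    all_goals
      simp only at *
      linarith

/-- rescaled zigzag -/
def phi (j : ℕ) (x : ℝ) : ℝ := zig (3 ^ (j * (j + 1)) * x) / 3 ^ (j * (j + 1))

theorem phi_cont (j : ℕ) : Continuous (phi j) :=
  (zig_cont.comp (continuous_const.mul continuous_id)).div_const _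

theorem phi_vol (j : ℕ) (A : Set ℝ) (hA : MeasurableSet A) :
    volume (phi j ⁻¹' A) = volume A := by
  have hc : (3:ℝ) ^ (j * (j + 1)) ≠ 0 := by positivity
  have hc0 : (0:ℝ) < (3:ℝ) ^ (j * (j + 1)) := by positivity
  unfold phi
  generalize (3:ℝ) ^ (j * (j + 1)) = c at *
  have : (fun x => zig (c * x) / c) ⁻¹' A =
      (fun x => c * x) ⁻¹' (zig ⁻¹' ((fun x => c⁻¹ * x) ⁻¹' A)) := by
    ext x; simp [div_eq_inv_mul]
  change volume ((fun x => zig (c * x) / c) ⁻¹' A) = _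
  rw [this, Real.volume_preimage_mul_left hc, zig_vol _ ((measurable_const_mul _) hA),
    Real.volume_preimage_mul_left (inv_ne_zero hc), ← mul_assoc,
    ← ENNReal.ofReal_mul (abs_nonneg _), ← abs_mul, inv_inv, inv_mul_cancel₀ hc]
  simp

theorem phi_mem (j : ℕ) (x : ℝ) (hx : x ∈ Icc (0:ℝ) 1) : phi j x ∈ Icc (0:ℝ) 1 := by
  have hc0 : (0:ℝ) < (3:ℝ) ^ (j * (j + 1)) := by positivity
  have hi : ((3 ^ (j * (j + 1)) : ℤ) : ℝ) = (3:ℝ) ^ (j * (j + 1)) := by push_cast; rfl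
  have hci : (0:ℤ) < (3:ℤ) ^ (j * (j + 1)) := by positivity
  unfold phi
  generalize (3:ℝ) ^ (j * (j + 1)) = c at *
  generalize (3:ℤ) ^ (j * (j + 1)) = d at *
  subst hi
  obtain ⟨h0, h1⟩ := hx
  have hn : (0:ℝ) ≤ d * x := by positivity
  have hm : (d:ℝ) * x ≤ d := by nlinarith
  constructor
  · apply div_nonneg _ hc0.le
    have := (zig_mem _ _ (Int.floor_le (d * x)) (Int.lt_floor_add_one _).le).1
    have h : (0:ℝ) ≤ ⌊(d:ℝ) * x⌋ := by exact_mod_cast Int.floor_nonneg.2 hn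
    linarith
  · rw [div_le_one hc0]
    rcases hm.lt_or_eq with h | h
    · have := (zig_mem _ _ (Int.floor_le (d * x)) (Int.lt_floor_add_one _).le).2
      have h : ((⌊(d:ℝ) * x⌋ : ℝ)) + 1 ≤ d := by exact_mod_cast Int.floor_lt.2 h
      linarith
    · rw [h, zig_int]

theorem phi_lip (j : ℕ) (x y : ℝ) : |phi j x - phi j y| ≤ 3 * |x - y| := by
  have hc0 : (0:ℝ) < (3:ℝ) ^ (j * (j + 1)) := by positivity
  unfold phi
  generalize (3:ℝ) ^ (j * (j + 1)) = c at *
  rw [← sub_div, abs_div, abs_of_pos hc0, div_le_iff₀ hc0]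
  refine (zig_lip _ _).trans ?_
  rw [← mul_sub, abs_mul, abs_of_pos hc0]
  linarith

theorem phi_sub (j : ℕ) (x : ℝ) : |phi j x - x| ≤ 1 / 3 ^ (j * (j + 1)) := by
  have hc0 : (0:ℝ) < (3:ℝ) ^ (j * (j + 1)) := by positivity
  unfold phi
  generalize (3:ℝ) ^ (j * (j + 1)) = c at *
  have : zig (c * x) / c - x = (zig (c * x) - c * x) / c := by field_simp
  rw [this, abs_div, abs_of_pos hc0]
  gcongr
  exact zig_sub _

theorem phi_fix (j d : ℕ) (hd : d ≤ j * (j + 1)) (k : ℤ) : phi j (k / 3 ^ d) = k / 3 ^ d := by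
  unfold phi
  obtain ⟨e, he⟩ := Nat.exists_eq_add_of_le hd
  rw [he, pow_add]
  have : (3:ℝ) ^ d * 3 ^ e * (k / 3 ^ d) = ((3 ^ e * k : ℤ) : ℝ) := by
    push_cast; field_simp
  rw [this, zig_int]; push_cast; field_simp

theorem phi_nbr (j d : ℕ) (hd : j * (j + 1) ≤ d) (k : ℤ) : ∃ l l' : ℤ, |l - l'| = 1 ∧
    phi j (k / 3 ^ (d + 1)) = l / 3 ^ d ∧ phi j ((k + 1) / 3 ^ (d + 1)) = l' / 3 ^ d := by
  obtain ⟨e, rfl⟩ := Nat.exists_eq_add_of_le hd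
  obtain ⟨l, l', h, h1, h2⟩ := zig_nbr (3 ^ e) (by positivity) k
  push_cast at h1 h2
  refine ⟨l, l', h, ?_, ?_⟩
  · have : (3:ℝ) ^ (j * (j + 1)) * (k / 3 ^ (j * (j + 1) + e + 1)) = k / (3 * 3 ^ e) := by
      rw [pow_succ, pow_add]; field_simp
    rw [phi, this, h1, pow_add]; field_simp
  · have : (3:ℝ) ^ (j * (j + 1)) * ((k + 1) / 3 ^ (j * (j + 1) + e + 1)) =
        (k + 1) / (3 * 3 ^ e) := by
      rw [pow_succ, pow_add]; field_simp
    rw [phi, this, h2, pow_add]; field_simp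

/-- approximants -/
def F : ℕ → ℝ → ℝ
  | 0 => id
  | n + 1 => F n ∘ phi n

theorem F_cont (n : ℕ) : Continuous (F n) := by
  induction n with
  | zero => exact continuous_id
  | succ n ih => exact ih.comp (phi_cont n)

theorem F_vol (n : ℕ) : ∀ A : Set ℝ, MeasurableSet A → volume (F n ⁻¹' A) = volume A := by
  induction n with
  | zero => intro A _; rfl
  | succ n ih =>
    intro A hA
    change volume (phi n ⁻¹' (F n ⁻¹' A)) = _
    rw [phi_vol _ _ ((F_cont n).measurable hA), ih A hA]

theorem F_mem (n : ℕ) : ∀ x ∈ Icc (0:ℝ) 1, F n x ∈ Icc (0:ℝ) 1 := by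
  induction n with
  | zero => intro x hx; exact hx
  | succ n ih => intro x hx; exact ih _ (phi_mem n x hx)

theorem F_lip (n : ℕ) : ∀ x y, |F n x - F n y| ≤ 3 ^ n * |x - y| := by
  induction n with
  | zero => intro x y; simp [F]
  | succ n ih =>
    intro x y
    refine (ih _ _).trans ?_
    rw [pow_succ, mul_assoc]
    gcongr
    exact phi_lip n x y

theorem F_succ_sub (n : ℕ) (x : ℝ) : |F (n + 1) x - F n x| ≤ 1 / 3 ^ (n * n) := by
  refine (F_lip n (phi n x) x).trans ?_
  refine (mul_le_mul_of_nonneg_left (phi_sub n x) (by positivity)).trans ?_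
  rw [mul_add, pow_add, mul_one]
  apply le_of_eq; field_simp

theorem F_add_sub (k : ℕ) : ∀ n x, |F (n + k) x - F n x| ≤ 2 / 3 ^ (n * n) := by
  induction k with
  | zero => intro n x; simp only [add_zero, sub_self, abs_zero]; positivity
  | succ k ih =>
    intro n x
    have h1 := ih (n + 1) x
    have h2 := F_succ_sub n x
    have e : n + (k + 1) = n + 1 + k := by ring
    rw [e]
    have h3 : (2:ℝ) / 3 ^ ((n + 1) * (n + 1)) ≤ 1 / 3 ^ (n * n) := by
      have : (n + 1) * (n + 1) = n * n + (2 * n) + 1 := by ring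
      rw [this, pow_succ, pow_add, div_le_div_iff₀ (by positivity) (by positivity)]
      have : (1:ℝ) ≤ 3 ^ (2 * n) := one_le_pow₀ (by norm_num)
      have h4 : (0:ℝ) < 3 ^ (n * n) := by positivity
      nlinarith
    calc _ ≤ |F (n + 1 + k) x - F (n + 1) x| + |F (n + 1) x - F n x| := abs_sub_le _ _ _
      _ ≤ 1 / 3 ^ (n * n) + 1 / 3 ^ (n * n) := by linarith
      _ = _ := by ring

theorem F_lim (x : ℝ) : ∃ l, Tendsto (fun n => F n x) atTop (𝓝 l) := by
  apply cauchySeq_tendsto_of_complete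
  apply cauchySeq_of_le_geometric (1/3) 1 (by norm_num)
  intro n
  rw [dist_comm, Real.dist_eq]
  refine (F_succ_sub n x).trans ?_
  rw [one_mul, one_div_pow]
  apply one_div_le_one_div_of_le (by positivity)
  exact pow_le_pow_right₀ (by norm_num) (Nat.le_mul_self n)

/-- the limit function -/
def G (x : ℝ) : ℝ := (F_lim x).choose

theorem G_lim (x : ℝ) : Tendsto (fun n => F n x) atTop (𝓝 (G x)) := (F_lim x).choose_spec

theorem G_sub (n : ℕ) (x : ℝ) : |G x - F n x| ≤ 2 / 3 ^ (n * n) := by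
  have h : Tendsto (fun k => |F (n + k) x - F n x|) atTop (𝓝 |G x - F n x|) := by
    have := (tendsto_add_atTop_iff_nat n).2 (G_lim x)
    simp_rw [add_comm _ n] at this
    exact (this.sub_const _).abs
  exact le_of_tendsto h (Eventually.of_forall fun k => F_add_sub k n x)

theorem G_grid (n : ℕ) (k : ℤ) : G (k / 3 ^ (n * (n + 1))) = F n (k / 3 ^ (n * (n + 1))) := by
  have h : ∀ j, F (n + j) (k / 3 ^ (n * (n + 1))) = F n (k / 3 ^ (n * (n + 1))) := by
    intro j
    induction j with
    | zero => rfl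
    | succ j ih =>
      rw [← ih]
      change F (n + j) (phi (n + j) _) = _
      rw [phi_fix]
      gcongr <;> omega
  refine tendsto_nhds_unique (G_lim _) ?_
  rw [← tendsto_add_atTop_iff_nat n]
  simp_rw [add_comm _ n, h]
  exact tendsto_const_nhds

theorem F_nbr (n : ℕ) : ∀ (d : ℕ) (k l : ℤ), n * (n + 1) ≤ d + n → |k - l| = 1 →
    |F n (k / 3 ^ (d + n)) - F n (l / 3 ^ (d + n))| = 1 / 3 ^ d := by
  induction n with
  | zero =>
    intro d k l _ h
    simp only [F, id, add_zero]
    rw [← sub_div, abs_div, abs_of_pos (by positivity : (0:ℝ) < 3 ^ d)]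
    congr 1
    exact_mod_cast h
  | succ n ih =>
    intro d k l hd h
    wlog hkl : l = k + 1 generalizing k l
    · rw [abs_sub_comm]
      refine this l k (by rwa [abs_sub_comm]) ?_
      rcases (abs_eq (by norm_num)).1 h with h | h <;> omega
    subst hkl
    have hd' : n * (n + 1) ≤ d + n := by nlinarith
    obtain ⟨a, b, hab, h1, h2⟩ := phi_nbr n (d + n) hd' k
    change |F n (phi n _) - F n (phi n _)| = _
    rw [← add_assoc]
    push_cast
    rw [h1, h2]
    exact ih d a b hd' hab

theorem G_nbr (n : ℕ) (k : ℤ) :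
    |G ((k + 1) / 3 ^ (n * (n + 1))) - G (k / 3 ^ (n * (n + 1)))| = 3 ^ n / 3 ^ (n * (n + 1)) := by
  have h2 := G_grid n (k + 1)
  push_cast at h2
  rw [h2, G_grid]
  have h := F_nbr n (n * n) (k + 1) k (by rw [mul_add, mul_one]) (by simp)
  push_cast at h
  rw [mul_add, mul_one, h, pow_add]
  field_simp

theorem G_holder (α : ℝ) (hα : α ∈ Ioo (0:ℝ) 1) : HolderOnUnit G α := by
  set β := 1 - α with hβ
  have hβ0 : 0 < β := by linarith [hα.2]
  set K := (1 + β) ^ 2 / (4 * β) with hK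
  refine ⟨5 * 3 ^ K, ?_⟩
  intro x hx y hy
  rcases eq_or_ne x y with rfl | hxy
  · simp only [sub_self, abs_zero]; positivity
  have ht : 0 < |x - y| := abs_pos.2 (sub_ne_zero.2 hxy)
  have ht1 : |x - y| ≤ 1 := by
    rw [abs_le]; constructor <;> linarith [hx.1, hx.2, hy.1, hy.2]
  set t := |x - y| with htd
  have hex : ∃ n : ℕ, (1:ℝ) / 3 ^ (n * (n + 1)) ≤ t := by
    obtain ⟨n, hn⟩ := exists_pow_lt_of_lt_one ht (by norm_num : (1/3:ℝ) < 1)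
    refine ⟨n, le_trans ?_ hn.le⟩
    rw [one_div_pow]
    apply one_div_le_one_div_of_le (by positivity)
    exact pow_le_pow_right₀ (by norm_num) (by nlinarith)
  classical
  obtain ⟨n, hn, hmin⟩ : ∃ n : ℕ, (1:ℝ) / 3 ^ (n * (n + 1)) ≤ t ∧
      t ≤ (3:ℝ) ^ (-((n:ℝ) * (n - 1))) := by
    refine ⟨Nat.find hex, Nat.find_spec hex, ?_⟩
    rcases h : Nat.find hex with _ | m
    · simpa using ht1
    · have := Nat.find_min hex (m := m) (by omega)
      push Not at this
      refine this.le.trans (le_of_eq ?_)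
      rw [Real.rpow_neg (by norm_num), one_div, ← Real.rpow_natCast]
      congr 2
      push_cast; ring
  have hA : |G x - G y| ≤ 5 * 3 ^ n * t := by
    have a1 := G_sub n x
    have a2 := G_sub n y
    have a3 := F_lip n x y
    have a4 : (1:ℝ) / 3 ^ (n * n) ≤ 3 ^ n * t := by
      have : (1:ℝ) / 3 ^ (n * n) = 3 ^ n * (1 / 3 ^ (n * (n + 1))) := by
        rw [mul_add, pow_add, mul_one]; field_simp
      rw [this]; gcongr
    have a5 : (2:ℝ) / 3 ^ (n * n) = 2 * (1 / 3 ^ (n * n)) := by ring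
    rw [a5] at a1 a2
    rw [← htd] at a3
    rw [abs_le] at a1 a2 a3 ⊢
    constructor <;> linarith [a1.1, a1.2, a2.1, a2.2, a3.1, a3.2]
  have hB : (3:ℝ) ^ n * t ≤ 3 ^ K * t ^ α := by
    have e : t = t ^ β * t ^ α := by
      rw [← Real.rpow_add ht, hβ]; simp
    have hb : t ^ β ≤ (3:ℝ) ^ (-((n:ℝ) * (n - 1)) * β) := by
      rw [Real.rpow_mul (by norm_num)]
      exact Real.rpow_le_rpow ht.le hmin hβ0.le
    conv_lhs => rw [e]
    rw [← mul_assoc]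
    gcongr
    calc (3:ℝ) ^ n * t ^ β ≤ (3:ℝ) ^ (n:ℝ) * (3:ℝ) ^ (-((n:ℝ) * (n - 1)) * β) := by
          rw [Real.rpow_natCast]; gcongr
      _ = (3:ℝ) ^ ((n:ℝ) + -((n:ℝ) * (n - 1)) * β) := by rw [Real.rpow_add (by norm_num)]
      _ ≤ 3 ^ K := by
        apply Real.rpow_le_rpow_of_exponent_le (by norm_num)
        rw [hK, le_div_iff₀ (by positivity)]
        nlinarith [sq_nonneg (2 * β * n - (1 + β))]
  calc _ ≤ 5 * 3 ^ n * t := hA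
    _ = 5 * (3 ^ n * t) := by ring
    _ ≤ 5 * (3 ^ K * t ^ α) := by gcongr
    _ = _ := by ring

theorem G_measurable : Measurable G :=
  measurable_of_tendsto_metrizable (fun n => (F_cont n).measurable) (tendsto_pi_nhds.2 G_lim)

theorem F_map (n : ℕ) : Measure.map (F n) (volume.restrict (Icc (0:ℝ) 1)) =
    volume.restrict (Icc (0:ℝ) 1) := by
  have hp : MeasurePreserving (F n) volume volume := by
    refine ⟨(F_cont n).measurable, ?_⟩
    ext A hA
    rw [Measure.map_apply (F_cont n).measurable hA, F_vol n A hA]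
  have h := (hp.restrict_preimage (measurableSet_Icc (a := (0:ℝ)) (b := 1))).map_eq
  have he : (Icc (0:ℝ) 1 : Set ℝ) =ᵐ[volume] F n ⁻¹' Icc (0:ℝ) 1 := by
    apply ae_eq_of_subset_of_measure_ge (show Icc (0:ℝ) 1 ⊆ F n ⁻¹' Icc (0:ℝ) 1 from F_mem n)
    · rw [F_vol n _ measurableSet_Icc]
    · exact measurableSet_Icc.nullMeasurableSet
    · rw [F_vol n _ measurableSet_Icc]; simp
  rwa [← Measure.restrict_congr_set he] at h

theorem G_map : Measure.map G (volume.restrict (Icc (0:ℝ) 1)) =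
    volume.restrict (Icc (0:ℝ) 1) := by
  have : IsFiniteMeasure (Measure.map G (volume.restrict (Icc (0:ℝ) 1))) :=
    Measure.isFiniteMeasure_map _ _
  apply ext_of_forall_integral_eq_of_IsFiniteMeasure
  intro g
  rw [integral_map G_measurable.aemeasurable g.continuous.aestronglyMeasurable]
  have h : Tendsto (fun n => ∫ x in Icc (0:ℝ) 1, g (F n x)) atTop
      (𝓝 (∫ x in Icc (0:ℝ) 1, g (G x))) := by
    apply tendsto_integral_of_dominated_convergence (fun _ => ‖g‖)
    · intro n
      exact (g.continuous.comp (F_cont n)).aestronglyMeasurable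
    · exact integrable_const _
    · intro n
      exact Eventually.of_forall fun x => g.norm_coe_le_norm _
    · exact Eventually.of_forall fun x => (g.continuous.tendsto _).comp (G_lim x)
  have h2 : ∀ n, ∫ x in Icc (0:ℝ) 1, g (F n x) = ∫ x in Icc (0:ℝ) 1, g x := by
    intro n
    rw [← integral_map (F_cont n).aemeasurable g.continuous.aestronglyMeasurable, F_map]
  simp_rw [h2] at h
  exact tendsto_nhds_unique h tendsto_const_nhds

theorem grid_exists (D : ℕ) (x : ℝ) (hx : x ∈ Icc (0:ℝ) 1) : ∃ k : ℤ,
    (k:ℝ) / 3 ^ D ∈ Icc 0 x ∧ ((k:ℝ) + 1) / 3 ^ D ∈ Icc x 1 := by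
  have hc0 : (0:ℝ) < (3:ℝ) ^ D := by positivity
  have hi : ((3 ^ D : ℤ) : ℝ) = (3:ℝ) ^ D := by push_cast; rfl
  have hci : (0:ℤ) < (3:ℤ) ^ D := by positivity
  generalize (3:ℝ) ^ D = c at *
  generalize (3:ℤ) ^ D = d at *
  subst hi
  obtain ⟨h0, h1⟩ := hx
  rcases h1.lt_or_eq with h | h
  · refine ⟨⌊d * x⌋, ⟨?_, ?_⟩, ?_, ?_⟩
    · apply div_nonneg _ hc0.le
      exact_mod_cast Int.floor_nonneg.2 (by positivity)
    · rw [div_le_iff₀ hc0, mul_comm]; exact Int.floor_le _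
    · rw [le_div_iff₀ hc0, mul_comm]; exact (Int.lt_floor_add_one _).le
    · rw [div_le_one hc0]
      have : ⌊(d:ℝ) * x⌋ < d := Int.floor_lt.2 (by nlinarith)
      exact_mod_cast this
  · subst h
    have hd1 : (1:ℝ) ≤ d := by exact_mod_cast hci
    refine ⟨d - 1, ⟨?_, ?_⟩, ?_, ?_⟩
    · push_cast; apply div_nonneg _ hc0.le; linarith
    · push_cast; rw [div_le_one hc0]; linarith
    · push_cast; rw [le_div_iff₀ hc0]; linarith
    · push_cast; rw [div_le_one hc0]; linarith

theorem G_not_diff (x : ℝ) (hx : x ∈ Icc (0:ℝ) 1) :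
    ¬ DifferentiableWithinAt ℝ G (Icc (0:ℝ) 1) x := by
  intro hd
  obtain ⟨C, hC⟩ := hd.isBigO_sub.bound
  obtain ⟨δ, hδ, hball⟩ := Metric.mem_nhdsWithin_iff.1 hC
  obtain ⟨n1, hn1⟩ := exists_pow_lt_of_lt_one hδ (by norm_num : (1/3:ℝ) < 1)
  obtain ⟨n2, hn2⟩ := pow_unbounded_of_one_lt C (by norm_num : (1:ℝ) < 3)
  set n := max n1 n2
  have hs : (1:ℝ) / 3 ^ (n * (n + 1)) < δ := by
    refine lt_of_le_of_lt ?_ hn1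
    rw [one_div_pow]
    apply one_div_le_one_div_of_le (by positivity)
    refine pow_le_pow_right₀ (by norm_num) ?_
    have : n1 ≤ n := le_max_left _ _
    nlinarith
  have hn : C < 3 ^ n := hn2.trans_le (pow_le_pow_right₀ (by norm_num) (le_max_right _ _))
  obtain ⟨k, ⟨a0, a1⟩, b0, b1⟩ := grid_exists (n * (n + 1)) x hx
  have key := G_nbr n k
  have hab : ((k:ℝ) + 1) / 3 ^ (n * (n + 1)) = k / 3 ^ (n * (n + 1)) + 1 / 3 ^ (n * (n + 1)) := by
    ring
  have e3 : (3:ℝ) ^ n / 3 ^ (n * (n + 1)) = 3 ^ n * (1 / 3 ^ (n * (n + 1))) := by ring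
  have hp : (0:ℝ) < 1 / 3 ^ (n * (n + 1)) := by positivity
  rw [e3] at key
  set a := (k:ℝ) / 3 ^ (n * (n + 1))
  set b := ((k:ℝ) + 1) / 3 ^ (n * (n + 1))
  set s := (1:ℝ) / 3 ^ (n * (n + 1))
  have ha : |G a - G x| ≤ C * |a - x| := by
    refine hball ⟨?_, a0, a1.trans hx.2⟩
    rw [Metric.mem_ball, Real.dist_eq, abs_lt]; constructor <;> linarith
  have hb : |G b - G x| ≤ C * |b - x| := by
    refine hball ⟨?_, hx.1.trans b0, b1⟩
    rw [Metric.mem_ball, Real.dist_eq, abs_lt]; constructor <;> linarith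
  rw [abs_of_nonpos (by linarith : a - x ≤ 0)] at ha
  rw [abs_of_nonneg (by linarith : 0 ≤ b - x)] at hb
  have h1 : |G b - G a| ≤ |G b - G x| + |G a - G x| := by
    rw [abs_sub_comm (G a)]; exact abs_sub_le _ _ _
  have h2 : |G b - G a| ≤ C * s := by
    have : C * s = C * (b - x) + C * -(a - x) := by rw [← mul_add]; congr 1; linarith
    linarith
  rw [key] at h2
  nlinarith

theorem G_crit : critSet1 G = Icc (0:ℝ) 1 := by
  ext x
  exact ⟨fun h => h.1, fun h => ⟨h, Or.inl (G_not_diff x h)⟩⟩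

/-- There exist `f : [0,1] → ℝ` Hölder continuous of every exponent `α ∈ (0,1)` and `r > 0`
such that `f_#(𝟙_S L¹) = r · 𝟙_{[0,1]} L¹`; in particular the pushforward is absolutely
continuous with respect to Lebesgue measure and nonzero. -/
theorem exists_holder_pushforward_eq_smul_lebesgue :
    ∃ (f : ℝ → ℝ) (r : ℝ),
      (∀ α ∈ Set.Ioo (0:ℝ) 1, HolderOnUnit f α) ∧
      0 < r ∧
      Measure.map f (volume.restrict (critSet1 f)) =
        ENNReal.ofReal r • volume.restrict (Set.Icc (0:ℝ) 1) ∧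
      Measure.map f (volume.restrict (critSet1 f)) ≪ volume ∧
      Measure.map f (volume.restrict (critSet1 f)) ≠ 0 := by
  refine ⟨G, 1, G_holder, one_pos, ?_, ?_, ?_⟩
  · rw [G_crit, G_map]; simp
  · rw [G_crit, G_map]; exact Measure.absolutelyContinuous_of_le Measure.restrict_le_self
  · rw [G_crit, G_map]
    intro h
    have := congrArg (fun μ => μ univ) h
    simp at this
end
end
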